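/- arXiv:2208.06123 — 8 statements merged into one kernel-verified Lean document; each statement's English description precedes it below -/
import Mathlib

section
/- There exists a constant C₀ > 0, independent of N and M, with the following property: for every integer N ≥ 1 (with h = 1/N), every M > 0, and all periodic grid functions φ̂, φ* satisfying 0 < φ̂(i,j,k) ≤ M and 0 < φ*(i,j,k) ≤ M for all (i,j,k) and such that φ* − φ̂ has zero mean, every zero-mean periodic grid function ψ with −Δ_h ψ = φ̂ − φ* satisfies ‖ψ‖_∞ ≤ C₀·M. -/
open scoped BigOperators

/-- The periodic grid of indices: `(ZMod N)^3`. -/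
abbrev GridIdx (N : ℕ) := ZMod N × ZMod N × ZMod N

namespace PNP

/-- Shift the first index by `a`. -/
def xsh {N : ℕ} (p : GridIdx N) (a : ZMod N) : GridIdx N := (p.1 + a, p.2.1, p.2.2)
/-- Shift the second index by `a`. -/
def ysh {N : ℕ} (p : GridIdx N) (a : ZMod N) : GridIdx N := (p.1, p.2.1 + a, p.2.2)
/-- Shift the third index by `a`. -/
def zsh {N : ℕ} (p : GridIdx N) (a : ZMod N) : GridIdx N := (p.1, p.2.1, p.2.2 + a)

/-- Forward difference in `x`: `(D_x f)(p) = (f(p + e_x) - f(p)) / h` with `h = 1/N`. -/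
noncomputable def Dx (N : ℕ) (f : GridIdx N → ℝ) : GridIdx N → ℝ :=
  fun p => (f (xsh p 1) - f p) * N
/-- Forward difference in `y`. -/
noncomputable def Dy (N : ℕ) (f : GridIdx N → ℝ) : GridIdx N → ℝ :=
  fun p => (f (ysh p 1) - f p) * N
/-- Forward difference in `z`. -/
noncomputable def Dz (N : ℕ) (f : GridIdx N → ℝ) : GridIdx N → ℝ :=
  fun p => (f (zsh p 1) - f p) * N

/-- Backward difference in `x`: `(d_x f)(p) = (f(p) - f(p - e_x)) / h`. -/
noncomputable def dxm (N : ℕ) (f : GridIdx N → ℝ) : GridIdx N → ℝ :=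
  fun p => (f p - f (xsh p (-1))) * N
/-- Backward difference in `y`. -/
noncomputable def dym (N : ℕ) (f : GridIdx N → ℝ) : GridIdx N → ℝ :=
  fun p => (f p - f (ysh p (-1))) * N
/-- Backward difference in `z`. -/
noncomputable def dzm (N : ℕ) (f : GridIdx N → ℝ) : GridIdx N → ℝ :=
  fun p => (f p - f (zsh p (-1))) * N

/-- Forward average in `x`: `(A_x f)(p) = (f(p + e_x) + f(p)) / 2`. -/
noncomputable def Ax (N : ℕ) (f : GridIdx N → ℝ) : GridIdx N → ℝ :=
  fun p => (f (xsh p 1) + f p) / 2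
/-- Forward average in `y`. -/
noncomputable def Ay (N : ℕ) (f : GridIdx N → ℝ) : GridIdx N → ℝ :=
  fun p => (f (ysh p 1) + f p) / 2
/-- Forward average in `z`. -/
noncomputable def Az (N : ℕ) (f : GridIdx N → ℝ) : GridIdx N → ℝ :=
  fun p => (f (zsh p 1) + f p) / 2

/-- The discrete Laplacian `Δ_h f = d_x(D_x f) + d_y(D_y f) + d_z(D_z f)`. -/
noncomputable def lap (N : ℕ) (f : GridIdx N → ℝ) : GridIdx N → ℝ :=
  fun p => dxm N (Dx N f) p + dym N (Dy N f) p + dzm N (Dz N f) p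

/-- The discrete inner product `⟨f, g⟩ = h³ ∑ f·g` with `h = 1/N`. -/
noncomputable def ip (N : ℕ) [NeZero N] (f g : GridIdx N → ℝ) : ℝ :=
  ((1 : ℝ) / N) ^ 3 * ∑ p : GridIdx N, f p * g p

/-- The discrete `L²` norm `‖f‖₂ = ⟨f, f⟩^{1/2}`. -/
noncomputable def l2 (N : ℕ) [NeZero N] (f : GridIdx N → ℝ) : ℝ :=
  Real.sqrt (ip N f f)

/-- The discrete maximum norm `‖f‖_∞ = max |f|`. -/
noncomputable def linf (N : ℕ) [NeZero N] (f : GridIdx N → ℝ) : ℝ :=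
  ⨆ p : GridIdx N, |f p|

/-- A grid function has zero mean if its values sum to zero. -/
def zeroMean (N : ℕ) [NeZero N] (f : GridIdx N → ℝ) : Prop :=
  ∑ p : GridIdx N, f p = 0

/-- With `F(x) = x·ln x`, the difference quotient `G¹_a(x) = (F(x) - F(a))/(x - a)`
for `x ≠ a`, with value `F'(a) = ln a + 1` at `x = a`. -/
noncomputable def G1 (a x : ℝ) : ℝ :=
  if x = a then Real.log a + 1
  else (x * Real.log x - a * Real.log a) / (x - a)

end PNP

open PNP

/-- The concave barrier on the cyclic group. -/
noncomputable def barr (N : ℕ) (d : ZMod N) : ℝ := (d.val : ℝ) * ((N : ℝ) - d.val)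

lemma barr_natCast (N : ℕ) [NeZero N] (n : ℕ) (hn : n ≤ N) :
    barr N (n : ZMod N) = (n : ℝ) * ((N : ℝ) - n) := by
  unfold barr
  rcases hn.lt_or_eq with h | h
  · rw [ZMod.val_natCast_of_lt h]
  · subst h
    simp

lemma barr_second (N : ℕ) [NeZero N] (d : ZMod N) (hd : d ≠ 0) :
    barr N (d + 1) + barr N (d - 1) - 2 * barr N d = -2 := by
  have hv : d.val ≠ 0 := by
    rwa [Ne, ZMod.val_eq_zero]
  obtain ⟨m, hm⟩ := Nat.exists_eq_succ_of_ne_zero hv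
  have hlt : d.val < N := ZMod.val_lt d
  have hd' : d = ((m + 1 : ℕ) : ZMod N) := by
    rw [← Nat.succ_eq_add_one, ← hm, ZMod.natCast_val, ZMod.cast_id]
  have h1 : d + 1 = ((m + 2 : ℕ) : ZMod N) := by
    rw [hd']; push_cast; ring
  have h2 : d - 1 = ((m : ℕ) : ZMod N) := by
    rw [hd']; push_cast; ring
  rw [h1, h2, hd', barr_natCast _ _ (by omega), barr_natCast _ _ (by omega),
    barr_natCast _ _ (by omega)]
  push_cast
  ring

lemma barr_nonneg (N : ℕ) [NeZero N] (d : ZMod N) : 0 ≤ barr N d := by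
  have : (d.val : ℝ) ≤ N := by exact_mod_cast (ZMod.val_lt d).le
  exact mul_nonneg (Nat.cast_nonneg _) (by linarith)

lemma barr_le (N : ℕ) [NeZero N] (d : ZMod N) : barr N d ≤ (N : ℝ) ^ 2 := by
  have h1 : (d.val : ℝ) ≤ N := by exact_mod_cast (ZMod.val_lt d).le
  have h0 : (0 : ℝ) ≤ d.val := Nat.cast_nonneg _
  unfold barr
  nlinarith

/-- Oscillation in one coordinate, by doubling that variable and the maximum principle. -/
lemma osc_one (N : ℕ) [NeZero N] (M : ℝ) (hM : 0 < M) (F : ZMod N → ZMod N → ZMod N → ℝ)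
    (hF : ∀ i j k, |(F (i + 1) j k + F (i - 1) j k + F i (j + 1) k + F i (j - 1) k
      + F i j (k + 1) + F i j (k - 1) - 6 * F i j k) * (N : ℝ) ^ 2| ≤ M)
    (i i' j k : ZMod N) : F i j k - F i' j k ≤ M := by
  have hN : (0 : ℝ) < (N : ℝ) ^ 2 := by
    have : (0 : ℝ) < N := by exact_mod_cast Nat.pos_of_ne_zero (NeZero.ne N)
    positivity
  let W : ZMod N × ZMod N × ZMod N × ZMod N → ℝ := fun q =>
    (F q.1 q.2.2.1 q.2.2.2 - F q.2.1 q.2.2.1 q.2.2.2) * (N : ℝ) ^ 2 - M * barr N (q.1 - q.2.1)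
  obtain ⟨⟨a, b, c, e⟩, hmax⟩ := Finite.exists_max W
  have key : a = b := by
    by_contra hab
    have h1 := hmax (a + 1, b, c, e)
    have h2 := hmax (a - 1, b, c, e)
    have h3 := hmax (a, b + 1, c, e)
    have h4 := hmax (a, b - 1, c, e)
    have h5 := hmax (a, b, c + 1, e)
    have h6 := hmax (a, b, c - 1, e)
    have h7 := hmax (a, b, c, e + 1)
    have h8 := hmax (a, b, c, e - 1)
    have hs := barr_second N (a - b) (sub_ne_zero.mpr hab)
    have e1 : a + 1 - b = a - b + 1 := by ring
    have e2 : a - 1 - b = a - b - 1 := by ring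
    have e3 : a - (b + 1) = a - b - 1 := by ring
    have e4 : a - (b - 1) = a - b + 1 := by ring
    simp only [W, e1, e2, e3, e4] at h1 h2 h3 h4 h5 h6 h7 h8
    have fa := (abs_le.mp (hF a c e)).1
    have fb := (abs_le.mp (hF b c e)).2
    have hs' : M * barr N (a - b + 1) + M * barr N (a - b - 1) - 2 * (M * barr N (a - b))
        = -2 * M := by linear_combination M * hs
    linarith
  have h := hmax (i, i', j, k)
  subst key
  have h0 := barr_nonneg N (a - a)
  have h1 := barr_le N (i - i')
  simp only [W] at h
  have h2 : (F i j k - F i' j k) * (N : ℝ) ^ 2 ≤ M * (N : ℝ) ^ 2 := by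
    have := mul_nonneg hM.le h0
    have := mul_le_mul_of_nonneg_left h1 hM.le
    linarith
  exact le_of_mul_le_mul_right h2 hN

/-- Uniform bound `‖(-Δ_h)⁻¹(φ̂ - φ*)‖_∞ ≤ C₀ M` for positive data bounded by `M`. -/
theorem stmt2 :
    ∃ C0 : ℝ, 0 < C0 ∧
      ∀ (N : ℕ) [NeZero N], ∀ M : ℝ, 0 < M →
      ∀ φhat φstar ψ : GridIdx N → ℝ,
        (∀ p, 0 < φhat p ∧ φhat p ≤ M) →
        (∀ p, 0 < φstar p ∧ φstar p ≤ M) →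
        zeroMean N (fun p => φstar p - φhat p) →
        zeroMean N ψ →
        (∀ p, -lap N ψ p = φhat p - φstar p) →
        linf N ψ ≤ C0 * M := by
  refine ⟨3, by norm_num, ?_⟩
  intro N _ M hM φhat φstar ψ hhat hstar _ hψ hlap
  have hL : ∀ i j k : ZMod N, |(ψ (i + 1, j, k) + ψ (i - 1, j, k) + ψ (i, j + 1, k)
      + ψ (i, j - 1, k) + ψ (i, j, k + 1) + ψ (i, j, k - 1) - 6 * ψ (i, j, k)) * (N : ℝ) ^ 2|
      ≤ M := by
    intro i j k
    have h := hlap (i, j, k)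
    have h1 := hhat (i, j, k)
    have h2 := hstar (i, j, k)
    simp only [lap, dxm, dym, dzm, Dx, Dy, Dz, xsh, ysh, zsh,
      ← sub_eq_add_neg, sub_add_cancel] at h
    rw [abs_le]
    constructor <;> linarith
  have osc : ∀ p q : GridIdx N, ψ p - ψ q ≤ 3 * M := by
    rintro ⟨i, j, k⟩ ⟨i', j', k'⟩
    have h1 := osc_one N M hM (fun i j k => ψ (i, j, k)) hL i i' j k
    have h2 := osc_one N M hM (fun j i k => ψ (i, j, k))
      (fun j i k => by convert hL i j k using 3; ring) j j' i' k
    have h3 := osc_one N M hM (fun k i j => ψ (i, j, k))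
      (fun k i j => by convert hL i j k using 3; ring) k k' i' j'
    linarith
  have hψ' : ∑ p : GridIdx N, ψ p = 0 := hψ
  obtain ⟨q, -, hq⟩ := Finset.exists_le_of_sum_le (s := (Finset.univ : Finset (GridIdx N)))
    (f := ψ) (g := fun _ => 0) Finset.univ_nonempty (by simp [hψ'])
  obtain ⟨r, -, hr⟩ := Finset.exists_le_of_sum_le (s := (Finset.univ : Finset (GridIdx N)))
    (f := fun _ => 0) (g := ψ) Finset.univ_nonempty (by simp [hψ'])
  unfold linf
  refine ciSup_le fun p => abs_le.mpr ⟨?_, ?_⟩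
  · have := osc r p
    linarith
  · have := osc p q
    linarith
end

section
/- For every M > 0 there exists a constant C₁ > 0, depending only on M, with the following property: for every integer N ≥ 1 (with h = 1/N), every g₀ > 0, all periodic grid functions φ₁, φ₂ with ‖φ₁‖_∞ ≤ M and ‖φ₂‖_∞ ≤ M such that φ₁ − φ₂ has zero mean, and every periodic grid function g with g(i,j,k) ≥ g₀ for all (i,j,k), every zero-mean periodic grid function ψ satisfying −(d_x(A_x g·D_x ψ) + d_y(A_y g·D_y ψ) + d_z(A_z g·D_z ψ)) = φ₁ − φ₂ obeys ‖ψ‖_∞ ≤ C₁·g₀^{−1}·h^{−1/2}. -/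
open scoped BigOperators

open PNP


/-- Oscillation along a path is bounded by the total variation. -/
lemma osc_nat (F : ℕ → ℝ) (b : ℕ) : ∀ i ≤ b, ∀ j ≤ b,
    |F i - F j| ≤ ∑ t ∈ Finset.range b, |F (t + 1) - F t| := by
  have key : ∀ i j, i ≤ j → j ≤ b →
      |F i - F j| ≤ ∑ t ∈ Finset.range b, |F (t + 1) - F t| := by
    intro i j hij hj
    have h1 : F j - F i = ∑ t ∈ Finset.Ico i j, (F (t + 1) - F t) := by
      rw [Finset.sum_Ico_sub _ hij]
    rw [abs_sub_comm, h1]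
    refine (Finset.abs_sum_le_sum_abs _ _).trans ?_
    refine Finset.sum_le_sum_of_subset_of_nonneg ?_ (fun _ _ _ => abs_nonneg _)
    intro t ht
    simp only [Finset.mem_Ico, Finset.mem_range] at *
    omega
  intro i hi j hj
  rcases le_total i j with h | h
  · exact key i j h hj
  · rw [abs_sub_comm]; exact key j i h hi

lemma avg_diff (F : ℕ → ℝ) (a b : ℕ) (ha : 1 ≤ a) (hab : a ≤ b) :
    |(∑ i ∈ Finset.range a, F i) / a - (∑ i ∈ Finset.range b, F i) / b|
      ≤ ∑ t ∈ Finset.range b, |F (t + 1) - F t| := by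
  have ha' : (0 : ℝ) < a := by exact_mod_cast ha
  have hb' : (0 : ℝ) < b := by exact_mod_cast (lt_of_lt_of_le ha hab)
  set V := ∑ t ∈ Finset.range b, |F (t + 1) - F t| with hV
  have h1 : (∑ i ∈ Finset.range a, F i) / a - (∑ i ∈ Finset.range b, F i) / b
      = (∑ i ∈ Finset.range a, ∑ j ∈ Finset.range b, (F i - F j)) / (a * b) := by
    simp only [Finset.sum_sub_distrib, Finset.sum_const, Finset.card_range, nsmul_eq_mul]
    rw [← Finset.mul_sum]
    field_simp
  rw [h1, abs_div, abs_of_pos (mul_pos ha' hb'), div_le_iff₀ (mul_pos ha' hb')]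
  refine (Finset.abs_sum_le_sum_abs _ _).trans ?_
  have h2 : ∀ i ∈ Finset.range a, |∑ j ∈ Finset.range b, (F i - F j)| ≤ b * V := by
    intro i hi
    refine (Finset.abs_sum_le_sum_abs _ _).trans ?_
    have : ∀ j ∈ Finset.range b, |F i - F j| ≤ V := by
      intro j hj
      simp only [Finset.mem_range] at hi hj
      exact osc_nat F b i (by omega) j (by omega)
    refine (Finset.sum_le_sum this).trans ?_
    simp
  refine (Finset.sum_le_sum h2).trans ?_
  simp only [Finset.sum_const, Finset.card_range, nsmul_eq_mul]
  apply le_of_eq; ring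

lemma step_bound {ι : Type*} (R : Finset ι) (f : ℕ → ι → ℝ) (a b : ℕ) (E : ℝ)
    (ha : 1 ≤ a) (hab : a ≤ b) (hb2 : b ≤ 2 * a) (hR : a * a ≤ R.card)
    (hE : ∑ i ∈ Finset.range b, ∑ r ∈ R, (f (i + 1) r - f i r) ^ 2 ≤ E) :
    |(∑ i ∈ Finset.range a, ∑ r ∈ R, f i r) / (a * R.card)
      - (∑ i ∈ Finset.range b, ∑ r ∈ R, f i r) / (b * R.card)| ≤ √(2 * E / a) := by
  have ha' : (0 : ℝ) < a := by exact_mod_cast ha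
  have hb2' : (b : ℝ) ≤ 2 * a := by exact_mod_cast hb2
  have hR' : (a : ℝ) * a ≤ R.card := by exact_mod_cast hR
  have hRp : (0 : ℝ) < R.card := lt_of_lt_of_le (by positivity) hR'
  have hE0 : 0 ≤ E := le_trans (Finset.sum_nonneg fun _ _ => Finset.sum_nonneg fun _ _ => sq_nonneg _) hE
  have h1 := avg_diff (fun i => ∑ r ∈ R, f i r) a b ha hab
  have h2 : ∑ t ∈ Finset.range b, |∑ r ∈ R, f (t + 1) r - ∑ r ∈ R, f t r|
      ≤ ∑ p ∈ Finset.range b ×ˢ R, |f (p.1 + 1) p.2 - f p.1 p.2| := by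
    rw [Finset.sum_product]
    refine Finset.sum_le_sum fun t _ => ?_
    rw [← Finset.sum_sub_distrib]
    exact Finset.abs_sum_le_sum_abs _ _
  set W := ∑ p ∈ Finset.range b ×ˢ R, |f (p.1 + 1) p.2 - f p.1 p.2| with hW
  have hW0 : 0 ≤ W := Finset.sum_nonneg fun _ _ => abs_nonneg _
  have h3 : W ^ 2 ≤ (b * R.card) * E := by
    have := sq_sum_le_card_mul_sum_sq (s := Finset.range b ×ˢ R)
      (f := fun p => |f (p.1 + 1) p.2 - f p.1 p.2|)
    simp only [sq_abs, Finset.card_product, Finset.card_range, Nat.cast_mul] at this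
    rw [Finset.sum_product (f := fun p : ℕ × ι => (f (p.1 + 1) p.2 - f p.1 p.2) ^ 2)] at this
    exact this.trans (mul_le_mul_of_nonneg_left hE (by positivity))
  have h4 : (∑ i ∈ Finset.range a, ∑ r ∈ R, f i r) / (a * R.card)
      - (∑ i ∈ Finset.range b, ∑ r ∈ R, f i r) / (b * R.card)
      = ((∑ i ∈ Finset.range a, ∑ r ∈ R, f i r) / a
      - (∑ i ∈ Finset.range b, ∑ r ∈ R, f i r) / b) / R.card := by
    rw [sub_div, div_div, div_div]
  rw [h4, abs_div, abs_of_pos hRp]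
  apply Real.le_sqrt_of_sq_le
  have h5 := h1.trans h2
  have h6 : |(∑ i ∈ Finset.range a, ∑ r ∈ R, f i r) / a
      - (∑ i ∈ Finset.range b, ∑ r ∈ R, f i r) / b| ^ 2 ≤ (b * R.card) * E :=
    (pow_le_pow_left₀ (abs_nonneg _) h5 2).trans h3
  rw [div_pow, div_le_div_iff₀ (by positivity) ha']
  calc _ ≤ ((b * R.card) * E) * a := mul_le_mul_of_nonneg_right h6 ha'.le
    _ ≤ ((2 * a * R.card) * E) * a := by gcongr
    _ = (2 * E * R.card) * (a * a) := by ring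
    _ ≤ (2 * E * R.card) * R.card := by gcongr
    _ = _ := by ring

/-- Box sum. -/
noncomputable def boxS (f : ℕ → ℕ → ℕ → ℝ) (a b c : ℕ) : ℝ :=
  ∑ i ∈ Finset.range a, ∑ j ∈ Finset.range b, ∑ k ∈ Finset.range c, f i j k

lemma boxS_mono (f : ℕ → ℕ → ℕ → ℝ) (hf : ∀ i j k, 0 ≤ f i j k) (a b c N : ℕ)
    (ha : a ≤ N) (hb : b ≤ N) (hc : c ≤ N) : boxS f a b c ≤ boxS f N N N := by
  unfold boxS
  have hs : ∀ m ≤ N, Finset.range m ⊆ Finset.range N := fun m hm => Finset.range_mono hm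
  refine (Finset.sum_le_sum_of_subset_of_nonneg (hs a ha) fun _ _ _ =>
    Finset.sum_nonneg fun _ _ => Finset.sum_nonneg fun _ _ => hf _ _ _).trans ?_
  refine Finset.sum_le_sum fun i _ => ?_
  refine (Finset.sum_le_sum_of_subset_of_nonneg (hs b hb) fun _ _ _ =>
    Finset.sum_nonneg fun _ _ => hf _ _ _).trans ?_
  refine Finset.sum_le_sum fun j _ => ?_
  exact Finset.sum_le_sum_of_subset_of_nonneg (hs c hc) fun _ _ _ => hf _ _ _

lemma boxS_x (f : ℕ → ℕ → ℕ → ℝ) (a b c : ℕ) : boxS f a b c =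
    ∑ i ∈ Finset.range a, ∑ r ∈ Finset.range b ×ˢ Finset.range c, f i r.1 r.2 := by
  simp only [boxS, Finset.sum_product]

lemma boxS_y (f : ℕ → ℕ → ℕ → ℝ) (a b c : ℕ) : boxS f a b c =
    ∑ j ∈ Finset.range b, ∑ r ∈ Finset.range a ×ˢ Finset.range c, f r.1 j r.2 := by
  simp only [boxS, Finset.sum_product]
  rw [Finset.sum_comm]

lemma boxS_z (f : ℕ → ℕ → ℕ → ℝ) (a b c : ℕ) : boxS f a b c =
    ∑ k ∈ Finset.range c, ∑ r ∈ Finset.range a ×ˢ Finset.range b, f r.1 r.2 k := by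
  simp only [boxS, Finset.sum_product]
  symm
  rw [Finset.sum_comm]
  refine Finset.sum_congr rfl fun i _ => ?_
  rw [Finset.sum_comm]

lemma box_step (f : ℕ → ℕ → ℕ → ℝ) (N a n : ℕ) (E : ℝ)
    (hx : boxS (fun i j k => (f (i + 1) j k - f i j k) ^ 2) N N N ≤ E)
    (hy : boxS (fun i j k => (f i (j + 1) k - f i j k) ^ 2) N N N ≤ E)
    (hz : boxS (fun i j k => (f i j (k + 1) - f i j k) ^ 2) N N N ≤ E)
    (ha : 1 ≤ a) (han : a ≤ n) (hn : n ≤ 2 * a) (hN : n ≤ N) :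
    |boxS f a a a / (a * a * a) - boxS f n n n / (n * n * n)| ≤ 3 * √(2 * E / a) := by
  have s1 := step_bound (Finset.range a ×ˢ Finset.range a) (fun i r => f i r.1 r.2) a n E ha han hn
    (by simp) (by
      rw [← boxS_x (fun i j k => (f (i + 1) j k - f i j k) ^ 2)]
      exact (boxS_mono _ (fun _ _ _ => sq_nonneg _) _ _ _ N hN (by omega) (by omega)).trans hx)
  have s2 := step_bound (Finset.range n ×ˢ Finset.range a) (fun j r => f r.1 j r.2) a n E ha han hn
    (by simp; gcongr) (by
      rw [← boxS_y (fun i j k => (f i (j + 1) k - f i j k) ^ 2)]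
      exact (boxS_mono _ (fun _ _ _ => sq_nonneg _) _ _ _ N hN (by omega) (by omega)).trans hy)
  have s3 := step_bound (Finset.range n ×ˢ Finset.range n) (fun k r => f r.1 r.2 k) a n E ha han hn
    (by simp; gcongr) (by
      rw [← boxS_z (fun i j k => (f i j (k + 1) - f i j k) ^ 2)]
      exact (boxS_mono _ (fun _ _ _ => sq_nonneg _) _ _ _ N hN (by omega) (by omega)).trans hz)
  rw [← boxS_x f, ← boxS_x f] at s1
  rw [← boxS_y f, ← boxS_y f] at s2
  rw [← boxS_z f, ← boxS_z f] at s3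
  simp only [Finset.card_product, Finset.card_range, Nat.cast_mul] at s1 s2 s3
  have e1 : (a : ℝ) * (n * a) = n * (a * a) := by ring
  have e2 : (n : ℝ) * (n * a) = a * (n * n) := by ring
  rw [e1, e2] at s2
  rw [mul_assoc, mul_assoc]
  rw [abs_le] at *
  constructor <;> linarith [s1.1, s1.2, s2.1, s2.2, s3.1, s3.2]

lemma box_tele (f : ℕ → ℕ → ℕ → ℝ) (N : ℕ) (E : ℝ) (hE : 0 ≤ E)
    (hx : boxS (fun i j k => (f (i + 1) j k - f i j k) ^ 2) N N N ≤ E)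
    (hy : boxS (fun i j k => (f i (j + 1) k - f i j k) ^ 2) N N N ≤ E)
    (hz : boxS (fun i j k => (f i j (k + 1) - f i j k) ^ 2) N N N ≤ E) (n : ℕ) :
    1 ≤ n → n ≤ N →
    |f 0 0 0 - boxS f n n n / (n * n * n)| ≤ 24 * √E * (1 - 1 / √n) := by
  induction n using Nat.strong_induction_on with
  | _ n ih =>
    intro h1 hN
    rcases Nat.eq_or_lt_of_le h1 with h | h
    · subst h
      simp [boxS]
    · obtain ⟨a, ha⟩ : ∃ a, a = (n + 1) / 2 := ⟨_, rfl⟩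
      have ha1 : 1 ≤ a := by omega
      have i1 := ih a (by omega) ha1 (by omega)
      have i2 := box_step f N a n E hx hy hz ha1 (by omega) (by omega) hN
      have ha' : (0 : ℝ) < a := by exact_mod_cast ha1
      have hn' : (0 : ℝ) < n := by exact_mod_cast h1
      have h32 : (3 : ℝ) * a ≤ 2 * n := by
        have : 3 * a ≤ 2 * n := by omega
        exact_mod_cast this
      have e : √(2 * E / a) = √2 * √E * (1 / √a) := by
        rw [Real.sqrt_div (by positivity), Real.sqrt_mul (by norm_num)]; ring
      rw [e] at i2
      have hs2 : √2 ≤ 1.4143 := by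
        rw [Real.sqrt_le_left (by norm_num)]; norm_num
      have ht : 1 / √n ≤ 0.8166 * (1 / √a) := by
        have : √a ≤ 0.8166 * √n := by
          rw [Real.sqrt_le_left (by positivity), mul_pow, Real.sq_sqrt hn'.le]
          norm_num
          linarith
        have p1 : 0 < √(a : ℝ) := Real.sqrt_pos.2 ha'
        have p2 : 0 < √(n : ℝ) := Real.sqrt_pos.2 hn'
        rw [mul_one_div, div_le_div_iff₀ p2 p1]
        linarith
      have hs : 0 ≤ √E * (1 / √a) := by positivity
      have k1 : √E * (1 / √n) ≤ 0.8166 * (√E * (1 / √a)) := by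
        have := mul_le_mul_of_nonneg_left ht (Real.sqrt_nonneg E)
        linarith
      have k2 : √2 * √E * (1 / √a) ≤ 1.4143 * (√E * (1 / √a)) := by
        have := mul_le_mul_of_nonneg_right hs2 hs
        linarith
      have tri := abs_sub_le (f 0 0 0) (boxS f a a a / (a * a * a)) (boxS f n n n / (n * n * n))
      nlinarith

lemma sum_range_zmod (N : ℕ) [NeZero N] (u : ZMod N → ℝ) (x : ZMod N) :
    ∑ i ∈ Finset.range N, u (x + (i : ZMod N)) = ∑ t, u t := by
  rw [← Equiv.sum_comp (Equiv.addLeft x) u]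
  symm
  refine Finset.sum_bij' (fun t _ => t.val) (fun i _ => (i : ZMod N)) ?_ ?_ ?_ ?_ ?_
  · intro t _; simpa using ZMod.val_lt t
  · simp
  · intro t _; simp
  · intro i hi; exact ZMod.val_cast_of_lt (by simpa using hi)
  · intro t _; simp

lemma boxS_zmod (N : ℕ) [NeZero N] (u : GridIdx N → ℝ) (p : GridIdx N) :
    boxS (fun i j k => u (p.1 + (i : ZMod N), p.2.1 + (j : ZMod N), p.2.2 + (k : ZMod N))) N N N
      = ∑ q, u q := by
  unfold boxS
  rw [Fintype.sum_prod_type, ← sum_range_zmod N _ p.1]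
  refine Finset.sum_congr rfl fun i _ => ?_
  rw [Fintype.sum_prod_type, ← sum_range_zmod N _ p.2.1]
  refine Finset.sum_congr rfl fun j _ => ?_
  rw [← sum_range_zmod N _ p.2.2]

lemma sup_bound (N : ℕ) [NeZero N] (ψ : GridIdx N → ℝ) (h0 : ∑ p, ψ p = 0) (E : ℝ)
    (hx : ∑ p, (ψ (xsh p 1) - ψ p) ^ 2 ≤ E)
    (hy : ∑ p, (ψ (ysh p 1) - ψ p) ^ 2 ≤ E)
    (hz : ∑ p, (ψ (zsh p 1) - ψ p) ^ 2 ≤ E) (p : GridIdx N) : |ψ p| ≤ 24 * √E := by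
  have hE : 0 ≤ E := le_trans (Finset.sum_nonneg fun _ _ => sq_nonneg _) hx
  have hN : 1 ≤ N := Nat.one_le_iff_ne_zero.2 (NeZero.ne N)
  rw [← boxS_zmod N _ p] at h0 hx hy hz
  have := box_tele (fun i j k => ψ (p.1 + (i : ZMod N), p.2.1 + (j : ZMod N), p.2.2 + (k : ZMod N)))
    N E hE (by simpa [xsh, add_assoc] using hx) (by simpa [ysh, add_assoc] using hy)
    (by simpa [zsh, add_assoc] using hz) N hN le_rfl
  rw [h0] at this
  simp only [Nat.cast_zero, add_zero, zero_div, sub_zero] at this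
  refine this.trans ?_
  have : 0 ≤ 1 / √(N : ℝ) := by positivity
  have h2 := Real.sqrt_nonneg E
  nlinarith

lemma osc_zmod (N : ℕ) [NeZero N] (u : ZMod N → ℝ) (x y : ZMod N) :
    |u x - u y| ≤ ∑ t, |u (t + 1) - u t| := by
  have h := osc_nat (fun i => u (x + (i : ZMod N))) N 0 (by omega) (y - x).val (ZMod.val_lt _).le
  have h2 := sum_range_zmod N (fun t => |u (t + 1) - u t|) x
  simp only [Nat.cast_zero, add_zero, ZMod.natCast_val, ZMod.cast_id', id, Nat.cast_add,
    Nat.cast_one, ← add_assoc, add_sub_cancel] at h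
  rw [h2] at h
  exact h

lemma l1_bound (N : ℕ) [NeZero N] (ψ : GridIdx N → ℝ) (h0 : ∑ p, ψ p = 0) :
    ∑ p, |ψ p| ≤ N * ∑ p : GridIdx N,
      (|ψ (xsh p 1) - ψ p| + |ψ (ysh p 1) - ψ p| + |ψ (zsh p 1) - ψ p|) := by
  have hN : (0 : ℝ) < N := by exact_mod_cast Nat.pos_of_ne_zero (NeZero.ne N)
  set X : ZMod N → ZMod N → ℝ := fun j k => ∑ t, |ψ (t + 1, j, k) - ψ (t, j, k)| with hX
  set Y : ZMod N → ZMod N → ℝ := fun i k => ∑ t, |ψ (i, t + 1, k) - ψ (i, t, k)| with hY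
  set Z : ZMod N → ZMod N → ℝ := fun i j => ∑ t, |ψ (i, j, t + 1) - ψ (i, j, t)| with hZ
  have key : ∀ p q : GridIdx N, |ψ p - ψ q| ≤ X p.2.1 p.2.2 + Y q.1 p.2.2 + Z q.1 q.2.1 := by
    rintro ⟨i, j, k⟩ ⟨i', j', k'⟩
    have a1 := osc_zmod N (fun t => ψ (t, j, k)) i i'
    have a2 := osc_zmod N (fun t => ψ (i', t, k)) j j'
    have a3 := osc_zmod N (fun t => ψ (i', j', t)) k k'
    have t1 := abs_sub_le (ψ (i, j, k)) (ψ (i', j, k)) (ψ (i', j', k'))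
    have t2 := abs_sub_le (ψ (i', j, k)) (ψ (i', j', k)) (ψ (i', j', k'))
    simp only [hX, hY, hZ]
    linarith
  have hp : ∀ p : GridIdx N, (N : ℝ) ^ 3 * |ψ p| ≤
      ∑ q : GridIdx N, (X p.2.1 p.2.2 + Y q.1 p.2.2 + Z q.1 q.2.1) := by
    intro p
    have e : (N : ℝ) ^ 3 * ψ p = ∑ q : GridIdx N, (ψ p - ψ q) := by
      rw [Finset.sum_sub_distrib, h0]
      simp only [Finset.sum_const, Finset.card_univ, Fintype.card_prod, ZMod.card, nsmul_eq_mul]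
      push_cast
      ring
    have : (N : ℝ) ^ 3 * |ψ p| = |(N : ℝ) ^ 3 * ψ p| := by
      rw [abs_mul, abs_of_pos (pow_pos hN 3)]
    rw [this, e]
    exact (Finset.abs_sum_le_sum_abs _ _).trans (Finset.sum_le_sum fun q _ => key p q)
  have hs : (N : ℝ) ^ 3 * ∑ p, |ψ p| ≤
      ∑ p : GridIdx N, ∑ q : GridIdx N, (X p.2.1 p.2.2 + Y q.1 p.2.2 + Z q.1 q.2.1) := by
    rw [Finset.mul_sum]
    exact Finset.sum_le_sum fun p _ => hp p
  have eX : ∑ p : GridIdx N, |ψ (xsh p 1) - ψ p| = ∑ j, ∑ k, X j k := by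
    simp only [hX, xsh, Fintype.sum_prod_type]
    rw [Finset.sum_comm]
    refine Finset.sum_congr rfl fun j _ => ?_
    rw [Finset.sum_comm]
  have eY : ∑ p : GridIdx N, |ψ (ysh p 1) - ψ p| = ∑ i, ∑ k, Y i k := by
    simp only [hY, ysh, Fintype.sum_prod_type]
    refine Finset.sum_congr rfl fun j _ => ?_
    rw [Finset.sum_comm]
  have eZ : ∑ p : GridIdx N, |ψ (zsh p 1) - ψ p| = ∑ i, ∑ j, Z i j := by
    simp only [hZ, zsh, Fintype.sum_prod_type]
  have tot : ∑ p : GridIdx N, ∑ q : GridIdx N, (X p.2.1 p.2.2 + Y q.1 p.2.2 + Z q.1 q.2.1)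
      = (N : ℝ) ^ 4 * (∑ j, ∑ k, X j k + ∑ i, ∑ k, Y i k + ∑ i, ∑ j, Z i j) := by
    have c : ∑ k : ZMod N, ∑ i : ZMod N, Y i k = ∑ i, ∑ k, Y i k := Finset.sum_comm
    simp only [Finset.sum_add_distrib, Fintype.sum_prod_type, Finset.sum_const, Finset.card_univ,
      ZMod.card, Fintype.card_prod, nsmul_eq_mul, ← Finset.mul_sum, c]
    push_cast
    ring
  rw [Finset.sum_add_distrib, Finset.sum_add_distrib, eX, eY, eZ]
  rw [tot] at hs
  have : (0 : ℝ) < (N : ℝ) ^ 3 := by positivity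
  refine le_of_mul_le_mul_left (hs.trans (le_of_eq ?_)) this
  ring

/-- Summation by parts along a shift. -/
lemma sbp {α : Type*} [Fintype α] (s : α ≃ α) (G ψ : α → ℝ) (n : ℝ) :
    ∑ p, ψ p * ((G p * ((ψ (s p) - ψ p) * n) - G (s.symm p) * ((ψ p - ψ (s.symm p)) * n)) * n)
      = - (n ^ 2 * ∑ p, G p * (ψ (s p) - ψ p) ^ 2) := by
  have h := Equiv.sum_comp s
    (fun p => ψ p * (G (s.symm p) * ((ψ p - ψ (s.symm p)) * n) * n))
  simp only [Equiv.symm_apply_apply] at h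
  have e : ∀ p, ψ p * ((G p * ((ψ (s p) - ψ p) * n) - G (s.symm p) * ((ψ p - ψ (s.symm p)) * n)) * n)
    = ψ p * (G p * ((ψ (s p) - ψ p) * n) * n)
      - ψ p * (G (s.symm p) * ((ψ p - ψ (s.symm p)) * n) * n) := fun p => by ring
  simp only [e]
  rw [Finset.sum_sub_distrib, ← h, ← Finset.sum_sub_distrib, Finset.mul_sum, ← Finset.sum_neg_distrib]
  exact Finset.sum_congr rfl fun p _ => by ring

def xE (N : ℕ) : GridIdx N ≃ GridIdx N where
  toFun p := xsh p 1
  invFun p := xsh p (-1)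
  left_inv p := by simp [xsh]
  right_inv p := by simp [xsh]

def yE (N : ℕ) : GridIdx N ≃ GridIdx N where
  toFun p := ysh p 1
  invFun p := ysh p (-1)
  left_inv p := by simp [ysh]
  right_inv p := by simp [ysh]

def zE (N : ℕ) : GridIdx N ≃ GridIdx N where
  toFun p := zsh p 1
  invFun p := zsh p (-1)
  left_inv p := by simp [zsh]
  right_inv p := by simp [zsh]

lemma sbp_le {α : Type*} [Fintype α] (s : α ≃ α) (G ψ : α → ℝ) (n g0 : ℝ) (hG : ∀ p, g0 ≤ G p) :
    n ^ 2 * (g0 * ∑ p, (ψ (s p) - ψ p) ^ 2) ≤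
    - ∑ p, ψ p * ((G p * ((ψ (s p) - ψ p) * n) - G (s.symm p) * ((ψ (s (s.symm p)) - ψ (s.symm p)) * n)) * n) := by
  simp only [Equiv.apply_symm_apply]
  rw [sbp, neg_neg, Finset.mul_sum]
  refine mul_le_mul_of_nonneg_left (Finset.sum_le_sum fun p _ => ?_) (sq_nonneg n)
  exact mul_le_mul_of_nonneg_right (hG p) (sq_nonneg _)

lemma le_linf (N : ℕ) [NeZero N] (f : GridIdx N → ℝ) (p : GridIdx N) : |f p| ≤ linf N f :=
  le_ciSup (f := fun p => |f p|) (Set.finite_range _).bddAbove p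

/-- Bound `‖L_g⁻¹(φ₁ - φ₂)‖_∞ ≤ C₁ g₀⁻¹ h^{-1/2}` for a mobility bounded below by `g₀`. -/
theorem stmt3 (M : ℝ) (hM : 0 < M) :
    ∃ C1 : ℝ, 0 < C1 ∧
      ∀ (N : ℕ) [NeZero N], ∀ g0 : ℝ, 0 < g0 →
      ∀ φ1 φ2 g ψ : GridIdx N → ℝ,
        linf N φ1 ≤ M → linf N φ2 ≤ M →
        zeroMean N (fun p => φ1 p - φ2 p) →
        (∀ p, g0 ≤ g p) →
        zeroMean N ψ →
        (∀ p, -(dxm N (fun q => Ax N g q * Dx N ψ q) p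
              + dym N (fun q => Ay N g q * Dy N ψ q) p
              + dzm N (fun q => Az N g q * Dz N ψ q) p) = φ1 p - φ2 p) →
        linf N ψ ≤ C1 * g0⁻¹ * ((1 : ℝ) / N) ^ (-(1 : ℝ) / 2) := by
  refine ⟨100 * M, by positivity, ?_⟩
  intro N _ g0 hg0 φ1 φ2 g ψ h1 h2 _ hg hψ heq
  have hN : (0 : ℝ) < N := by exact_mod_cast Nat.pos_of_ne_zero (NeZero.ne N)
  set EX := ∑ p, (ψ (xsh p 1) - ψ p) ^ 2 with hEX
  set EY := ∑ p, (ψ (ysh p 1) - ψ p) ^ 2 with hEY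
  set EZ := ∑ p, (ψ (zsh p 1) - ψ p) ^ 2 with hEZ
  have pX : 0 ≤ EX := Finset.sum_nonneg fun _ _ => sq_nonneg _
  have pY : 0 ≤ EY := Finset.sum_nonneg fun _ _ => sq_nonneg _
  have pZ : 0 ≤ EZ := Finset.sum_nonneg fun _ _ => sq_nonneg _
  obtain ⟨E, hE⟩ : ∃ E, E = EX + EY + EZ := ⟨_, rfl⟩
  have pE : 0 ≤ E := by rw [hE]; positivity
  -- energy estimate
  have en : (N : ℝ) ^ 2 * (g0 * E) ≤ ∑ p, ψ p * (φ1 p - φ2 p) := by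
    have bx := sbp_le (xE N) (Ax N g) ψ N g0
      (fun p => by have := hg (xsh p 1); have := hg p; simp only [Ax]; linarith)
    have bdy := sbp_le (yE N) (Ay N g) ψ N g0
      (fun p => by have := hg (ysh p 1); have := hg p; simp only [Ay]; linarith)
    have bz := sbp_le (zE N) (Az N g) ψ N g0
      (fun p => by have := hg (zsh p 1); have := hg p; simp only [Az]; linarith)
    have e : ∑ p, ψ p * (φ1 p - φ2 p) =
        - (∑ p, ψ p * dxm N (fun q => Ax N g q * Dx N ψ q) p)
        + - (∑ p, ψ p * dym N (fun q => Ay N g q * Dy N ψ q) p)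
        + - (∑ p, ψ p * dzm N (fun q => Az N g q * Dz N ψ q) p) := by
      rw [← neg_add, ← neg_add, ← Finset.sum_add_distrib, ← Finset.sum_add_distrib,
        ← Finset.sum_neg_distrib]
      refine Finset.sum_congr rfl fun p _ => ?_
      rw [← heq p]; ring
    rw [e]
    have e2 : (N : ℝ) ^ 2 * (g0 * E) = (N : ℝ) ^ 2 * (g0 * EX) + (N : ℝ) ^ 2 * (g0 * EY)
      + (N : ℝ) ^ 2 * (g0 * EZ) := by rw [hE]; ring
    rw [e2]
    exact add_le_add (add_le_add bx bdy) bz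
  have up : ∑ p, ψ p * (φ1 p - φ2 p) ≤ 2 * M * ∑ p, |ψ p| := by
    rw [Finset.mul_sum]
    refine Finset.sum_le_sum fun p _ => ?_
    have a1 := (le_linf N φ1 p).trans h1
    have a2 := (le_linf N φ2 p).trans h2
    have a3 : |φ1 p - φ2 p| ≤ 2 * M := (abs_sub _ _).trans (by linarith)
    calc ψ p * (φ1 p - φ2 p) ≤ |ψ p * (φ1 p - φ2 p)| := le_abs_self _
      _ = |φ1 p - φ2 p| * |ψ p| := by rw [abs_mul, mul_comm]
      _ ≤ _ := mul_le_mul_of_nonneg_right a3 (abs_nonneg _)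
  have l1 := l1_bound N ψ hψ
  set W := ∑ p : GridIdx N,
      (|ψ (xsh p 1) - ψ p| + |ψ (ysh p 1) - ψ p| + |ψ (zsh p 1) - ψ p|) with hW
  have hW2 : W ^ 2 ≤ (N : ℝ) ^ 3 * (3 * E) := by
    have := sq_sum_le_card_mul_sum_sq (s := (Finset.univ : Finset (GridIdx N)))
      (f := fun p => |ψ (xsh p 1) - ψ p| + |ψ (ysh p 1) - ψ p| + |ψ (zsh p 1) - ψ p|)
    have c : ((Finset.univ : Finset (GridIdx N)).card : ℝ) = (N : ℝ) ^ 3 := by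
      simp [ZMod.card]; ring
    rw [c] at this
    refine this.trans (mul_le_mul_of_nonneg_left ?_ (by positivity))
    rw [hE, hEX, hEY, hEZ, ← Finset.sum_add_distrib, ← Finset.sum_add_distrib, Finset.mul_sum]
    refine Finset.sum_le_sum fun p _ => ?_
    rw [← sq_abs (ψ (xsh p 1) - ψ p), ← sq_abs (ψ (ysh p 1) - ψ p), ← sq_abs (ψ (zsh p 1) - ψ p)]
    nlinarith [sq_nonneg (|ψ (xsh p 1) - ψ p| - |ψ (ysh p 1) - ψ p|),
      sq_nonneg (|ψ (xsh p 1) - ψ p| - |ψ (zsh p 1) - ψ p|),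
      sq_nonneg (|ψ (ysh p 1) - ψ p| - |ψ (zsh p 1) - ψ p|)]
  have hs : √(N : ℝ) ^ 2 = N := Real.sq_sqrt hN.le
  have hsE : √E ^ 2 = E := Real.sq_sqrt pE
  have psN : 0 < √(N : ℝ) := Real.sqrt_pos.2 hN
  have hW3 : W ≤ 2 * N * √N * √E := by
    refine le_of_sq_le_sq ?_ (by positivity)
    calc W ^ 2 ≤ (N : ℝ) ^ 3 * (3 * E) := hW2
      _ ≤ (N : ℝ) ^ 3 * (4 * E) := by gcongr; norm_num
      _ = (2 * N * √N * √E) ^ 2 := by rw [mul_pow, mul_pow, hs, hsE]; ring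
  have main : (N : ℝ) ^ 2 * (g0 * √E ^ 2) ≤ (N : ℝ) ^ 2 * (4 * M * √N * √E) := by
    rw [hsE]
    calc _ ≤ _ := en
      _ ≤ _ := up
      _ ≤ 2 * M * (N * W) := by gcongr
      _ ≤ 2 * M * (N * (2 * N * √N * √E)) := by gcongr
      _ = _ := by ring
  have main2 : √E ≤ 4 * M * √N / g0 := by
    have m := le_of_mul_le_mul_left main (pow_pos hN 2)
    rw [le_div_iff₀ hg0]
    rcases (Real.sqrt_nonneg E).eq_or_lt with h | h
    · rw [← h, zero_mul]; positivity
    · refine le_of_mul_le_mul_right ?_ h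
      linarith
  have hr : ((1 : ℝ) / N) ^ (-(1 : ℝ) / 2) = √N := by
    rw [one_div, Real.inv_rpow hN.le, ← Real.rpow_neg hN.le, Real.sqrt_eq_rpow]
    norm_num
  rw [hr]
  refine ciSup_le fun p => ?_
  refine (sup_bound N ψ hψ E (by linarith) (by linarith) (by linarith) p).trans ?_
  calc 24 * √E ≤ 24 * (4 * M * √N / g0) := by gcongr
    _ = 96 * (M * g0⁻¹ * √N) := by ring
    _ ≤ 100 * (M * g0⁻¹ * √N) := by gcongr; norm_num
    _ = _ := by ring
end

section
/- Let F(x) = x·ln x and fix a > 0. The function G⁰_a(x) = ∫_a^x G¹_a(t) dt is convex on (0, ∞), where G¹_a(t) = (F(t) − F(a))/(t − a) for t ≠ a and G¹_a(a) = ln a + 1. -/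
open scoped BigOperators

open PNP

theorem G1_eq_dslope (a : ℝ) (ha : 0 < a) :
    G1 a = dslope (fun x => x * Real.log x) a := by
  funext x
  unfold G1
  split_ifs with h
  · subst h
    rw [dslope_same, Real.deriv_mul_log ha.ne']
  · rw [dslope_of_ne _ h, slope_def_field]

theorem G1_continuousOn (a : ℝ) (ha : 0 < a) : ContinuousOn (G1 a) (Set.Ioi 0) := by
  rw [G1_eq_dslope a ha, continuousOn_dslope (Ioi_mem_nhds ha)]
  exact ⟨Real.continuous_mul_log.continuousOn,
    (Real.hasDerivAt_mul_log ha.ne').differentiableAt⟩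

theorem G1_monotoneOn (a : ℝ) (ha : 0 < a) : MonotoneOn (G1 a) (Set.Ioi 0) := by
  have hc : ConvexOn ℝ (Set.Ioi (0 : ℝ)) (fun x => x * Real.log x) :=
    Real.convexOn_mul_log.subset Set.Ioi_subset_Ici_self (convex_Ioi 0)
  have tangent : ∀ x : ℝ, 0 < x →
      (Real.log a + 1) * (x - a) ≤ x * Real.log x - a * Real.log a := by
    intro x hx
    have h1 := Real.log_le_sub_one_of_pos (div_pos ha hx)
    rw [Real.log_div ha.ne' hx.ne'] at h1
    have h2 := mul_le_mul_of_nonneg_left h1 hx.le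
    have h3 : x * (a / x - 1) = a - x := by field_simp
    nlinarith
  intro x hx y hy hxy
  have hx0 : 0 < x := hx
  have hy0 : 0 < y := hy
  unfold G1
  split_ifs with h1 h2 h2
  · exact le_rfl
  · have : 0 < y - a := sub_pos.2 (lt_of_le_of_ne (h1 ▸ hxy) (Ne.symm h2))
    rw [le_div_iff₀ this]
    exact tangent y hy0
  · have : x - a < 0 := sub_neg.2 (lt_of_le_of_ne (h2 ▸ hxy) h1)
    rw [div_le_iff_of_neg this]
    exact tangent x hx0
  · exact hc.secant_mono (Set.mem_Ioi.2 ha) hx hy h1 h2 hxy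

/-- `G⁰_a(x) = ∫_a^x G¹_a(t) dt` is convex on `(0, ∞)`. -/
theorem stmt6 (a : ℝ) (ha : 0 < a) :
    ConvexOn ℝ (Set.Ioi (0 : ℝ)) (fun x => ∫ t in a..x, G1 a t) := by
  have hd : ∀ x : ℝ, 0 < x → HasDerivAt (fun x => ∫ t in a..x, G1 a t) (G1 a x) x := by
    intro x hx
    have hc := G1_continuousOn a ha
    refine intervalIntegral.integral_hasDerivAt_right ?_ ?_ (hc.continuousAt (Ioi_mem_nhds hx))
    · refine (hc.mono ?_).intervalIntegrable
      intro t ht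
      exact lt_of_lt_of_le (lt_min ha hx) ht.1
    · exact hc.stronglyMeasurableAtFilter isOpen_Ioi x hx
  refine MonotoneOn.convexOn_of_deriv (convex_Ioi 0)
    (fun x hx => (hd x hx).continuousAt.continuousWithinAt) ?_ ?_
  · rw [interior_Ioi]
    exact fun x hx => (hd x hx).differentiableAt.differentiableWithinAt
  · rw [interior_Ioi]
    exact (G1_monotoneOn a ha).congr fun x hx => (hd x hx).deriv.symm
end

section
/- Let n^m, n^{m−1}, p^m, p^{m−1} be pointwise-positive periodic grid functions such that n^m − p^m and n^{m−1} − p^{m−1} have zero mean. Then there exists exactly one pair (n^{m+1}, p^{m+1}) of pointwise-positive periodic grid functions with n^{m+1} − p^{m+1} of zero mean that solves the scheme. -/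
open scoped BigOperators

open PNP

namespace PNP

/-- Regularized face mobility (in `x`) built from the extrapolation `(3/2)a - (1/2)b`:
`((A_x((3/2)a - (1/2)b))² + Δt⁶)^{1/2}`. -/
noncomputable def mobX (N : ℕ) (dt : ℝ) (a b : GridIdx N → ℝ) : GridIdx N → ℝ :=
  fun p => Real.sqrt ((Ax N (fun q => (3/2) * a q - (1/2) * b q) p) ^ 2 + dt ^ 6)
/-- Regularized face mobility (in `y`). -/
noncomputable def mobY (N : ℕ) (dt : ℝ) (a b : GridIdx N → ℝ) : GridIdx N → ℝ :=
  fun p => Real.sqrt ((Ay N (fun q => (3/2) * a q - (1/2) * b q) p) ^ 2 + dt ^ 6)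
/-- Regularized face mobility (in `z`). -/
noncomputable def mobZ (N : ℕ) (dt : ℝ) (a b : GridIdx N → ℝ) : GridIdx N → ℝ :=
  fun p => Real.sqrt ((Az N (fun q => (3/2) * a q - (1/2) * b q) p) ^ 2 + dt ^ 6)

/-- The pair `(n1, p1)` solves the second-order scheme with data
`n0, nm1, p0, pm1`, with the chemical potentials `μn, μp`. -/
def SolvesSchemeWith (N : ℕ) [NeZero N] (dt Dc : ℝ)
    (n0 nm1 p0 pm1 n1 p1 μn μp : GridIdx N → ℝ) : Prop :=
  ∃ φn φp : GridIdx N → ℝ,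
    zeroMean N φn ∧
    (∀ q, -lap N φn q = (n1 q + n0 q) / 2 - (p1 q + p0 q) / 2) ∧
    zeroMean N φp ∧
    (∀ q, -lap N φp q = (p1 q + p0 q) / 2 - (n1 q + n0 q) / 2) ∧
    (∀ q, μn q = G1 (n0 q) (n1 q) - 1
      + dt * (Real.log (n1 q) - Real.log (n0 q)) + φn q) ∧
    (∀ q, μp q = G1 (p0 q) (p1 q) - 1
      + dt * (Real.log (p1 q) - Real.log (p0 q)) + φp q) ∧
    (∀ q, (n1 q - n0 q) / dt =
      dxm N (fun r => mobX N dt n0 nm1 r * Dx N μn r) q +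
      dym N (fun r => mobY N dt n0 nm1 r * Dy N μn r) q +
      dzm N (fun r => mobZ N dt n0 nm1 r * Dz N μn r) q) ∧
    (∀ q, (p1 q - p0 q) / dt =
      dxm N (fun r => mobX N dt (fun s => Dc * p0 s) (fun s => Dc * pm1 s) r * Dx N μp r) q +
      dym N (fun r => mobY N dt (fun s => Dc * p0 s) (fun s => Dc * pm1 s) r * Dy N μp r) q +
      dzm N (fun r => mobZ N dt (fun s => Dc * p0 s) (fun s => Dc * pm1 s) r * Dz N μp r) q)

/-- The pair `(n1, p1)` solves the second-order scheme, for some chemical potentials. -/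
def SolvesScheme (N : ℕ) [NeZero N] (dt Dc : ℝ)
    (n0 nm1 p0 pm1 n1 p1 : GridIdx N → ℝ) : Prop :=
  ∃ μn μp : GridIdx N → ℝ, SolvesSchemeWith N dt Dc n0 nm1 p0 pm1 n1 p1 μn μp

end PNP

namespace PNP

lemma G1_eq_dslope (a x : ℝ) (ha : 0 < a) :
    G1 a x = dslope (fun y => y * Real.log y) a x := by
  unfold G1
  by_cases h : x = a
  · subst h
    simp only [if_true, dslope_same]
    exact (Real.deriv_mul_log ha.ne').symm
  · rw [if_neg h, dslope_of_ne _ h, slope_def_field]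

lemma G1_continuousOn (a : ℝ) (ha : 0 < a) : ContinuousOn (G1 a) (Set.Ioi 0) := by
  have h : ContinuousOn (dslope (fun y => y * Real.log y) a) (Set.Ioi 0) := by
    rw [continuousOn_dslope (Ioi_mem_nhds ha)]
    exact ⟨Real.continuous_mul_log.continuousOn,
      (Real.hasDerivAt_mul_log ha.ne').differentiableAt⟩
  exact h.congr fun x _ => G1_eq_dslope a x ha

lemma G1_mono (a x y : ℝ) (ha : 0 < a) (hx : 0 < x) (hxy : x ≤ y) : G1 a x ≤ G1 a y := by
  have hy : 0 < y := hx.trans_le hxy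
  have hc : ConvexOn ℝ (Set.Ici (0:ℝ)) (fun y => y * Real.log y) := Real.convexOn_mul_log
  have hd := Real.hasDerivAt_mul_log ha.ne'
  rw [G1_eq_dslope a x ha, G1_eq_dslope a y ha]
  have hda : dslope (fun y => y * Real.log y) a a = Real.log a + 1 := by
    rw [dslope_same]; exact hd.deriv
  by_cases h1 : x = a
  · by_cases h2 : y = a
    · rw [h1, h2]
    · rw [h1, hda, dslope_of_ne _ h2]
      exact hc.le_slope_of_hasDerivAt ha.le hy.le (lt_of_le_of_ne (h1 ▸ hxy) (Ne.symm h2)) hd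
  · by_cases h2 : y = a
    · rw [h2, hda, dslope_of_ne _ h1, slope_comm]
      exact hc.slope_le_of_hasDerivAt hx.le ha.le (lt_of_le_of_ne (h2 ▸ hxy) h1) hd
    · rw [dslope_of_ne _ h1, dslope_of_ne _ h2]
      exact hc.slope_mono ha.le ⟨hx.le, h1⟩ ⟨hy.le, h2⟩ hxy

/-- The pointwise nonlinearity. -/
noncomputable def gg (dt a x : ℝ) : ℝ := G1 a x - 1 + dt * (Real.log x - Real.log a)

lemma gg_strict (dt a x y : ℝ) (hdt : 0 < dt) (ha : 0 < a) (hx : 0 < x) (hxy : x < y) :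
    gg dt a x < gg dt a y := by
  have := G1_mono a x y ha hx hxy.le
  have := mul_lt_mul_of_pos_left (Real.log_lt_log hx hxy) hdt
  unfold gg; linarith

/-- Inverse of the nonlinearity. -/
lemma exists_inv (dt a : ℝ) (hdt : 0 < dt) (ha : 0 < a) :
    ∃ Γ : ℝ → ℝ, Continuous Γ ∧ Monotone Γ ∧ (∀ w, 0 < Γ w) ∧ (∀ w, gg dt a (Γ w) = w) ∧
      (∀ x, 0 < x → Γ (gg dt a x) = x) := by
  have hm : StrictMono (fun s => gg dt a (Real.exp s)) := fun s t hst =>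
    gg_strict dt a _ _ hdt ha (Real.exp_pos s) (Real.exp_lt_exp.2 hst)
  have hcont : Continuous (fun s => gg dt a (Real.exp s)) := by
    have h1 : Continuous (fun s => G1 a (Real.exp s)) :=
      (G1_continuousOn a ha).comp_continuous Real.continuous_exp fun s => Real.exp_pos s
    unfold gg
    simp only [Real.log_exp]
    fun_prop
  have htop : Filter.Tendsto (fun s => gg dt a (Real.exp s)) Filter.atTop Filter.atTop := by
    have h0 : Filter.Tendsto (fun s : ℝ => dt * s + (G1 a 1 - 1 - dt * Real.log a))
        Filter.atTop Filter.atTop :=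
      Filter.tendsto_atTop_add_const_right _ _ (Filter.tendsto_id.const_mul_atTop hdt)
    refine Filter.tendsto_atTop_mono' _ ?_ h0
    filter_upwards [Filter.eventually_ge_atTop (0:ℝ)] with s hs
    have := G1_mono a 1 (Real.exp s) ha one_pos (Real.one_le_exp hs)
    simp only [gg, Real.log_exp]
    linarith
  have hbot : Filter.Tendsto (fun s => gg dt a (Real.exp s)) Filter.atBot Filter.atBot := by
    have h0 : Filter.Tendsto (fun s : ℝ => dt * s + (G1 a 1 - 1 - dt * Real.log a))
        Filter.atBot Filter.atBot :=
      Filter.tendsto_atBot_add_const_right _ _ (Filter.tendsto_id.const_mul_atBot hdt)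
    refine Filter.tendsto_atBot_mono' _ ?_ h0
    filter_upwards [Filter.eventually_le_atBot (0:ℝ)] with s hs
    have := G1_mono a (Real.exp s) 1 ha (Real.exp_pos s) (Real.exp_le_one_iff.2 hs)
    simp only [gg, Real.log_exp]
    linarith
  have hsurj := hcont.surjective htop hbot
  let e := hm.orderIsoOfSurjective _ hsurj
  have he : ∀ s, e s = gg dt a (Real.exp s) := fun s => rfl
  refine ⟨fun w => Real.exp (e.symm w), Real.continuous_exp.comp e.symm.continuous,
    Real.exp_monotone.comp e.symm.monotone, fun w => Real.exp_pos _, fun w => ?_, fun x hx => ?_⟩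
  · rw [← he]; simp
  · have : gg dt a x = e (Real.log x) := by rw [he, Real.exp_log hx]
    simp only [this, OrderIso.symm_apply_apply, Real.exp_log hx]

/-- Primitive of `Γ - a`, with linear growth. -/
lemma exists_prim (dt a : ℝ) (ha : 0 < a) (Γ : ℝ → ℝ) (hc : Continuous Γ) (hm : Monotone Γ)
    (hinv : ∀ x, 0 < x → Γ (gg dt a x) = x) :
    ∃ θ : ℝ → ℝ, ∃ c C : ℝ, 0 < c ∧ (∀ w, HasDerivAt θ (Γ w - a) w) ∧
      ∀ w, c * |w| - C ≤ θ w := by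
  let θ : ℝ → ℝ := fun w => ∫ t in (0:ℝ)..w, (Γ t - a)
  have hθ : ∀ w, HasDerivAt θ (Γ w - a) w := fun w =>
    ((hc.sub continuous_const).integral_hasStrictDerivAt 0 w).hasDerivAt
  have hconv : ConvexOn ℝ Set.univ θ := by
    refine MonotoneOn.convexOn_of_deriv convex_univ
      (fun w _ => (hθ w).continuousAt.continuousWithinAt)
      (fun w _ => (hθ w).differentiableAt.differentiableWithinAt) ?_
    intro x _ y _ hxy
    rw [(hθ x).deriv, (hθ y).deriv]
    linarith [hm hxy]
  have htan : ∀ v w, θ v + (Γ v - a) * (w - v) ≤ θ w := by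
    intro v w
    rcases lt_trichotomy v w with h | h | h
    · have := hconv.le_slope_of_hasDerivAt (Set.mem_univ v) (Set.mem_univ w) h (hθ v)
      rw [slope_def_field, le_div_iff₀ (by linarith)] at this
      linarith
    · subst h; simp
    · have := hconv.slope_le_of_hasDerivAt (Set.mem_univ w) (Set.mem_univ v) h (hθ v)
      rw [slope_def_field, div_le_iff₀ (by linarith)] at this
      linarith
  set v1 := gg dt a (2 * a)
  set v2 := gg dt a (a / 2)
  have e1 : Γ v1 = 2 * a := hinv _ (by linarith)
  have e2 : Γ v2 = a / 2 := hinv _ (by linarith)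
  refine ⟨θ, a / 2, |θ v1 - a * v1| + |θ v2 + a / 2 * v2|, by linarith, hθ, fun w => ?_⟩
  have h1 := htan v1 w
  have h2 := htan v2 w
  rw [e1] at h1
  rw [e2] at h2
  have h3 := neg_abs_le (θ v1 - a * v1)
  have h4 := neg_abs_le (θ v2 + a / 2 * v2)
  have h5 := abs_nonneg (θ v1 - a * v1)
  have h6 := abs_nonneg (θ v2 + a / 2 * v2)
  rcases abs_cases w with ⟨h, h'⟩ | ⟨h, h'⟩
  · rw [h]; nlinarith
  · rw [h]; nlinarith

/-- Abstract existence of a critical point. -/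
lemma exists_crit {ι I J K : Type} [Fintype ι] [Fintype I] [Fintype J] [Fintype K]
    (θ γ : ι → ℝ → ℝ) (c C : ι → ℝ) (hc : ∀ i, 0 < c i)
    (hθ : ∀ i w, HasDerivAt (θ i) (γ i w) w) (hco : ∀ i w, c i * |w| - C i ≤ θ i w)
    (m : ((ι → ℝ) × (I → ℝ)) →ₗ[ℝ] (J → ℝ)) (r : (I → ℝ) →ₗ[ℝ] (K → ℝ))
    (hr : LinearMap.ker r = ⊥) (b : (I → ℝ) →ₗ[ℝ] ℝ) :
    ∃ (w : ι → ℝ) (φ : I → ℝ), ∀ (η : ι → ℝ) (ψ : I → ℝ),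
      ∑ i, γ i (w i) * η i + ∑ j, 2 * (m (w, φ) j * m (η, ψ) j)
        + ∑ k, 2 * (r φ k * r ψ k) - b ψ = 0 := by
  classical
  let E : (ι → ℝ) × (I → ℝ) → ℝ := fun x =>
    ∑ i, θ i (x.1 i) + ∑ j, (m x j) ^ 2 + ∑ k, (r x.2 k) ^ 2 - b x.2
  have hθc : ∀ i, Continuous (θ i) := fun i =>
    continuous_iff_continuousAt.2 fun w => (hθ i w).continuousAt
  have hmc : Continuous m := m.continuous_of_finiteDimensional
  have hrc : Continuous r := r.continuous_of_finiteDimensional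
  have hbc : Continuous b := b.continuous_of_finiteDimensional
  have hE : Continuous E := by
    have h1 : ∀ j, Continuous fun x => m x j := fun j => (continuous_apply j).comp hmc
    have h2 : ∀ k, Continuous fun x => r x k := fun j => (continuous_apply j).comp hrc
    have h3 : ∀ i, Continuous fun x : (ι → ℝ) × (I → ℝ) => θ i (x.1 i) := fun i =>
      (hθc i).comp ((continuous_apply i).comp continuous_fst)
    have h4 : ∀ k, Continuous fun x : (ι → ℝ) × (I → ℝ) => r x.2 k := fun k =>
      (h2 k).comp continuous_snd
    have h5 : Continuous fun x : (ι → ℝ) × (I → ℝ) => b x.2 := hbc.comp continuous_snd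
    exact (((continuous_finsetSum _ fun i _ => h3 i).add
      (continuous_finsetSum _ fun j _ => (h1 j).pow 2)).add
      (continuous_finsetSum _ fun k _ => (h4 k).pow 2)).sub h5
  -- lower bounds
  obtain ⟨κ, hκ, hanti⟩ := LinearMap.exists_antilipschitzWith r hr
  have hr1 : ∀ φ, ‖φ‖ ≤ κ * ‖r φ‖ := fun φ => by
    have := hanti.le_mul_dist φ 0
    simpa using this
  have hr2 : ∀ φ, ‖r φ‖ ^ 2 ≤ ∑ k, (r φ k) ^ 2 := fun φ => by
    have h0 : 0 ≤ ∑ k, (r φ k) ^ 2 := Finset.sum_nonneg fun k _ => sq_nonneg _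
    have : ‖r φ‖ ≤ Real.sqrt (∑ k, (r φ k) ^ 2) := by
      rw [pi_norm_le_iff_of_nonneg (Real.sqrt_nonneg _)]
      intro k
      rw [Real.norm_eq_abs]
      apply Real.abs_le_sqrt
      exact Finset.single_le_sum (f := fun k => (r φ k) ^ 2) (fun k _ => sq_nonneg _)
        (Finset.mem_univ k)
    calc ‖r φ‖ ^ 2 ≤ (Real.sqrt (∑ k, (r φ k) ^ 2)) ^ 2 := by gcongr
      _ = _ := Real.sq_sqrt h0
  obtain ⟨β, hβ⟩ : ∃ β : ℝ, ∀ φ, b φ ≤ β * ‖φ‖ := by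
    refine ⟨‖LinearMap.toContinuousLinearMap b‖, fun φ => ?_⟩
    exact (le_abs_self _).trans ((LinearMap.toContinuousLinearMap b).le_opNorm φ)
  have hκ' : (0:ℝ) < κ := by exact_mod_cast hκ
  have hquad : ∃ C', ∀ φ, ‖φ‖ - C' ≤ ∑ k, (r φ k) ^ 2 - b φ := by
    refine ⟨((1 + β) * κ) ^ 2, fun φ => ?_⟩
    have h1 := hr1 φ
    have h2 := hr2 φ
    have h3 := hβ φ
    have h4 : ‖φ‖ ^ 2 ≤ κ ^ 2 * ‖r φ‖ ^ 2 := by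
      rw [← mul_pow]; gcongr
    have h5 : (‖φ‖ / κ) ^ 2 ≤ ‖r φ‖ ^ 2 := by
      rw [div_pow, div_le_iff₀ (by positivity)]; linarith
    have h6 : ‖φ‖ = (‖φ‖ / κ) * κ := by field_simp
    set t := ‖φ‖ / κ
    rw [h6] at h3 ⊢
    nlinarith [sq_nonneg (t - (1 + β) * κ / 2), sq_nonneg ((1 + β) * κ)]
  obtain ⟨C', hC'⟩ := hquad
  obtain ⟨c0, hc0, hc0'⟩ : ∃ c0 : ℝ, 0 < c0 ∧ ∀ i, c0 ≤ c i := by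
    by_cases hne : Nonempty ι
    · obtain ⟨i0, hi0⟩ := Finite.exists_min c
      exact ⟨c i0, hc i0, hi0⟩
    · exact ⟨1, one_pos, fun i => (hne ⟨i⟩).elim⟩
  have hθlow : ∀ w : ι → ℝ, c0 * ‖w‖ - ∑ i, C i ≤ ∑ i, θ i (w i) := by
    intro w
    have h1 : ‖w‖ ≤ ∑ i, |w i| := by
      rw [pi_norm_le_iff_of_nonneg (Finset.sum_nonneg fun i _ => abs_nonneg _)]
      intro i
      exact Finset.single_le_sum (f := fun i => |w i|) (fun i _ => abs_nonneg _)
        (Finset.mem_univ i)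
    have h2 : ∑ i, (c0 * |w i| - C i) ≤ ∑ i, θ i (w i) :=
      Finset.sum_le_sum fun i _ => le_trans (by
        have := mul_le_mul_of_nonneg_right (hc0' i) (abs_nonneg (w i)); linarith) (hco i (w i))
    rw [Finset.sum_sub_distrib, ← Finset.mul_sum] at h2
    have := mul_le_mul_of_nonneg_left h1 hc0.le
    linarith
  have hlow : ∀ x, min c0 1 * ‖x‖ - (∑ i, C i + C') ≤ E x := by
    intro x
    have h1 := hθlow x.1
    have h2 := hC' x.2
    have h3 : 0 ≤ ∑ j, (m x j) ^ 2 := Finset.sum_nonneg fun _ _ => sq_nonneg _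
    have h4 : ‖x‖ ≤ ‖x.1‖ + ‖x.2‖ := by
      rw [Prod.norm_def]
      exact max_le (by linarith [norm_nonneg x.2]) (by linarith [norm_nonneg x.1])
    have h5 : 0 < min c0 1 := lt_min hc0 one_pos
    have h6 := mul_le_mul_of_nonneg_left h4 h5.le
    have h7 := mul_le_mul_of_nonneg_right (min_le_left c0 1) (norm_nonneg x.1)
    have h8 := mul_le_mul_of_nonneg_right (min_le_right c0 1) (norm_nonneg x.2)
    simp only [E]
    linarith
  have hlim : Filter.Tendsto E (Filter.cocompact _) Filter.atTop := by
    refine Filter.tendsto_atTop_mono hlow ?_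
    exact Filter.tendsto_atTop_add_const_right _ _
      ((tendsto_norm_cocompact_atTop).const_mul_atTop (lt_min hc0 one_pos))
  obtain ⟨x, hx⟩ := hE.exists_forall_le hlim
  refine ⟨x.1, x.2, fun η ψ => ?_⟩
  have hder : HasDerivAt (fun t : ℝ => E (x + t • (η, ψ)))
      (∑ i, γ i (x.1 i) * η i + ∑ j, 2 * (m (x.1, x.2) j * m (η, ψ) j)
        + ∑ k, 2 * (r x.2 k * r ψ k) - b ψ) 0 := by
    have hlin : ∀ p q : ℝ, HasDerivAt (fun t : ℝ => p + t * q) q 0 := fun p q => by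
      simpa using ((hasDerivAt_id (0:ℝ)).mul_const q).const_add p
    simp only [E, map_add, map_smul, Prod.fst_add, Prod.snd_add, Prod.smul_fst, Prod.smul_snd,
      Pi.add_apply, Pi.smul_apply, smul_eq_mul]
    refine ((HasDerivAt.fun_add (HasDerivAt.fun_add (HasDerivAt.fun_sum fun i _ => ?_)
      (HasDerivAt.fun_sum fun j _ => ?_)) (HasDerivAt.fun_sum fun k _ => ?_)).sub ?_)
    · have h1 : HasDerivAt (θ i) (γ i (x.1 i)) (x.1 i + 0 * η i) := by
        simpa using hθ i (x.1 i)
      exact h1.comp (0:ℝ) (hlin (x.1 i) (η i))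
    · have := (hlin (m x j) (m (η, ψ) j)).fun_pow 2
      refine this.congr_deriv ?_
      norm_num
      ring
    · have := (hlin (r x.2 k) (r ψ k)).fun_pow 2
      refine this.congr_deriv ?_
      norm_num
      ring
    · exact hlin _ _
  have hmin : IsLocalMin (fun t : ℝ => E (x + t • (η, ψ))) 0 := by
    refine Filter.Eventually.of_forall fun t => ?_
    simpa using hx (x + t • (η, ψ))
  exact hmin.hasDerivAt_eq_zero hder

end PNP
namespace PNP

set_option linter.unusedSectionVars false

variable {N : ℕ} [NeZero N]


lemma parts_x (F η : GridIdx N → ℝ) : ∑ q, dxm N F q * η q = -∑ q, F q * Dx N η q := by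
  have h : ∑ q, F q * η (xsh q 1) = ∑ q, F (xsh q (-1)) * η q := by
    refine Fintype.sum_equiv (Equiv.addRight ((1, 0, 0) : GridIdx N)) _ _ fun q => ?_
    have h0 : q + ((1, 0, 0) : GridIdx N) = xsh q 1 := by
      simp [xsh, Prod.ext_iff]
    change F q * η (xsh q 1) = F (xsh (q + ((1, 0, 0) : GridIdx N)) (-1)) * η (q + ((1, 0, 0) : GridIdx N))
    rw [h0]
    simp [xsh]
  have e1 : ∑ q, dxm N F q * η q = (∑ q, F q * η q - ∑ q, F (xsh q (-1)) * η q) * N := by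
    rw [← Finset.sum_sub_distrib, Finset.sum_mul]
    exact Finset.sum_congr rfl fun q _ => by simp only [dxm]; ring
  have e2 : ∑ q, F q * Dx N η q = (∑ q, F q * η (xsh q 1) - ∑ q, F q * η q) * N := by
    rw [← Finset.sum_sub_distrib, Finset.sum_mul]
    exact Finset.sum_congr rfl fun q _ => by simp only [Dx]; ring
  rw [e1, e2, h]; ring

lemma parts_y (F η : GridIdx N → ℝ) : ∑ q, dym N F q * η q = -∑ q, F q * Dy N η q := by
  have h : ∑ q, F q * η (ysh q 1) = ∑ q, F (ysh q (-1)) * η q := by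
    refine Fintype.sum_equiv (Equiv.addRight ((0, 1, 0) : GridIdx N)) _ _ fun q => ?_
    have h0 : q + ((0, 1, 0) : GridIdx N) = ysh q 1 := by
      simp [ysh, Prod.ext_iff]
    change F q * η (ysh q 1) = F (ysh (q + ((0, 1, 0) : GridIdx N)) (-1)) * η (q + ((0, 1, 0) : GridIdx N))
    rw [h0]
    simp [ysh]
  have e1 : ∑ q, dym N F q * η q = (∑ q, F q * η q - ∑ q, F (ysh q (-1)) * η q) * N := by
    rw [← Finset.sum_sub_distrib, Finset.sum_mul]
    exact Finset.sum_congr rfl fun q _ => by simp only [dym]; ring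
  have e2 : ∑ q, F q * Dy N η q = (∑ q, F q * η (ysh q 1) - ∑ q, F q * η q) * N := by
    rw [← Finset.sum_sub_distrib, Finset.sum_mul]
    exact Finset.sum_congr rfl fun q _ => by simp only [Dy]; ring
  rw [e1, e2, h]; ring

lemma parts_z (F η : GridIdx N → ℝ) : ∑ q, dzm N F q * η q = -∑ q, F q * Dz N η q := by
  have h : ∑ q, F q * η (zsh q 1) = ∑ q, F (zsh q (-1)) * η q := by
    refine Fintype.sum_equiv (Equiv.addRight ((0, 0, 1) : GridIdx N)) _ _ fun q => ?_
    have h0 : q + ((0, 0, 1) : GridIdx N) = zsh q 1 := by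
      simp [zsh, Prod.ext_iff]
    change F q * η (zsh q 1) = F (zsh (q + ((0, 0, 1) : GridIdx N)) (-1)) * η (q + ((0, 0, 1) : GridIdx N))
    rw [h0]
    simp [zsh]
  have e1 : ∑ q, dzm N F q * η q = (∑ q, F q * η q - ∑ q, F (zsh q (-1)) * η q) * N := by
    rw [← Finset.sum_sub_distrib, Finset.sum_mul]
    exact Finset.sum_congr rfl fun q _ => by simp only [dzm]; ring
  have e2 : ∑ q, F q * Dz N η q = (∑ q, F q * η (zsh q 1) - ∑ q, F q * η q) * N := by
    rw [← Finset.sum_sub_distrib, Finset.sum_mul]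
    exact Finset.sum_congr rfl fun q _ => by simp only [Dz]; ring
  rw [e1, e2, h]; ring

/-- Weighted divergence-form operator. -/
noncomputable def divM (N : ℕ) (Mx My Mz μ : GridIdx N → ℝ) (q : GridIdx N) : ℝ :=
  dxm N (fun r => Mx r * Dx N μ r) q + dym N (fun r => My r * Dy N μ r) q +
    dzm N (fun r => Mz r * Dz N μ r) q

/-- Weighted Dirichlet form. -/
noncomputable def dirM (N : ℕ) [NeZero N] (Mx My Mz μ η : GridIdx N → ℝ) : ℝ :=
  ∑ q, (Mx q * Dx N μ q * Dx N η q + My q * Dy N μ q * Dy N η q + Mz q * Dz N μ q * Dz N η q)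

lemma divM_parts (Mx My Mz μ η : GridIdx N → ℝ) :
    ∑ q, divM N Mx My Mz μ q * η q = - dirM N Mx My Mz μ η := by
  simp only [divM, dirM, add_mul, Finset.sum_add_distrib, parts_x, parts_y, parts_z]
  ring

lemma lap_eq_divM (μ : GridIdx N → ℝ) (q) :
    lap N μ q = divM N (fun _ => 1) (fun _ => 1) (fun _ => 1) μ q := by
  simp [lap, divM]

lemma dirM_self_nonneg (Mx My Mz μ : GridIdx N → ℝ) (hx : ∀ q, 0 ≤ Mx q) (hy : ∀ q, 0 ≤ My q)
    (hz : ∀ q, 0 ≤ Mz q) : 0 ≤ dirM N Mx My Mz μ μ := by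
  refine Finset.sum_nonneg fun q _ => ?_
  have h1 := mul_nonneg (hx q) (mul_self_nonneg (Dx N μ q))
  have h2 := mul_nonneg (hy q) (mul_self_nonneg (Dy N μ q))
  have h3 := mul_nonneg (hz q) (mul_self_nonneg (Dz N μ q))
  linarith

lemma dirM_one (Mx My Mz μ : GridIdx N → ℝ) : dirM N Mx My Mz μ (fun _ => 1) = 0 := by
  simp [dirM, Dx, Dy, Dz]

lemma const_of_D_zero (f : GridIdx N → ℝ) (hx : ∀ q, Dx N f q = 0) (hy : ∀ q, Dy N f q = 0)
    (hz : ∀ q, Dz N f q = 0) (q : GridIdx N) : f q = f 0 := by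
  have hN : (N : ℝ) ≠ 0 := Nat.cast_ne_zero.2 (NeZero.ne N)
  have sx : ∀ a b c, f (a + 1, b, c) = f (a, b, c) := fun a b c => by
    have := hx (a, b, c)
    simp only [Dx, xsh, mul_eq_zero, hN, or_false] at this
    linarith
  have sy : ∀ a b c, f (a, b + 1, c) = f (a, b, c) := fun a b c => by
    have := hy (a, b, c)
    simp only [Dy, ysh, mul_eq_zero, hN, or_false] at this
    linarith
  have sz : ∀ a b c, f (a, b, c + 1) = f (a, b, c) := fun a b c => by
    have := hz (a, b, c)
    simp only [Dz, zsh, mul_eq_zero, hN, or_false] at this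
    linarith
  have key : ∀ (u : ZMod N → ℝ), (∀ a, u (a + 1) = u a) → ∀ a, u a = u 0 := by
    intro u hu a
    have h : ∀ k : ℕ, u (k : ZMod N) = u 0 := by
      intro k
      induction k with
      | zero => simp
      | succ k ih => rw [Nat.cast_succ, hu, ih]
    have := h a.val
    rwa [ZMod.natCast_zmod_val] at this
  obtain ⟨a, b, c⟩ := q
  have h1 := key (fun a => f (a, b, c)) (fun a => sx a b c) a
  have h2 := key (fun b => f (0, b, c)) (fun b => sy 0 b c) b
  have h3 := key (fun c => f (0, 0, c)) (fun c => sz 0 0 c) c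
  exact h1.trans (h2.trans h3)

lemma zero_of_const (f : GridIdx N → ℝ) (h : ∀ q, f q = f 0) (h0 : ∑ q, f q = 0) : f = 0 := by
  have : ∑ q : GridIdx N, f q = Fintype.card (GridIdx N) * f 0 := by
    rw [Finset.sum_congr rfl fun q _ => h q]; simp
  rw [h0] at this
  have hc : (Fintype.card (GridIdx N) : ℝ) ≠ 0 := by
    exact_mod_cast Fintype.card_ne_zero
  have hf : f 0 = 0 := by
    rcases mul_eq_zero.1 this.symm with h | h
    · exact (hc h).elim
    · exact h
  funext q; rw [h q, hf]; rfl

lemma D_zero_of_dir (f : GridIdx N → ℝ)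
    (h : dirM N (fun _ => 1) (fun _ => 1) (fun _ => 1) f f = 0) :
    (∀ q, Dx N f q = 0) ∧ (∀ q, Dy N f q = 0) ∧ (∀ q, Dz N f q = 0) := by
  have hh : ∀ q, Dx N f q = 0 ∧ Dy N f q = 0 ∧ Dz N f q = 0 := by
    intro q
    unfold dirM at h
    rw [Finset.sum_eq_zero_iff_of_nonneg] at h
    · have := h q (Finset.mem_univ q)
      have h1 := mul_self_nonneg (Dx N f q)
      have h2 := mul_self_nonneg (Dy N f q)
      have h3 := mul_self_nonneg (Dz N f q)
      refine ⟨?_, ?_, ?_⟩ <;> apply mul_self_eq_zero.1 <;> linarith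
    · intro q _
      have h1 := mul_self_nonneg (Dx N f q)
      have h2 := mul_self_nonneg (Dy N f q)
      have h3 := mul_self_nonneg (Dz N f q)
      linarith
  exact ⟨fun q => (hh q).1, fun q => (hh q).2.1, fun q => (hh q).2.2⟩

lemma zero_of_lap (f : GridIdx N → ℝ) (h : ∀ q, lap N f q = 0) (h0 : ∑ q, f q = 0) : f = 0 := by
  have h1 := divM_parts (fun _ => 1) (fun _ => 1) (fun _ => 1) f f
  simp only [← lap_eq_divM, h, zero_mul, Finset.sum_const_zero] at h1
  obtain ⟨hx, hy, hz⟩ := D_zero_of_dir f (by linarith)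
  exact zero_of_const f (const_of_D_zero f hx hy hz) h0

lemma divM_sub (Mx My Mz μ ν : GridIdx N → ℝ) (q) :
    divM N Mx My Mz (fun q => μ q - ν q) q = divM N Mx My Mz μ q - divM N Mx My Mz ν q := by
  simp only [divM, dxm, dym, dzm, Dx, Dy, Dz]; ring

lemma lap_add (μ ν : GridIdx N → ℝ) (q) :
    lap N (fun q => μ q + ν q) q = lap N μ q + lap N ν q := by
  simp only [lap, dxm, dym, dzm, Dx, Dy, Dz]; ring

lemma lap_sub (μ ν : GridIdx N → ℝ) (q) :
    lap N (fun q => μ q - ν q) q = lap N μ q - lap N ν q := by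
  simp only [lap, dxm, dym, dzm, Dx, Dy, Dz]; ring

lemma lap_neg (μ : GridIdx N → ℝ) (q) :
    lap N (fun q => - μ q) q = - lap N μ q := by
  simp only [lap, dxm, dym, dzm, Dx, Dy, Dz]; ring
end PNP
namespace PNP

variable {N : ℕ} [NeZero N]

/-- Weighted gradient of both potentials as a single linear map. -/
noncomputable def mMap (Nx Ny Nz Px Py Pz : GridIdx N → ℝ) :
    (((GridIdx N ⊕ GridIdx N) → ℝ) × (GridIdx N → ℝ)) →ₗ[ℝ]
      (((GridIdx N ⊕ GridIdx N ⊕ GridIdx N) ⊕ (GridIdx N ⊕ GridIdx N ⊕ GridIdx N)) → ℝ) where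
  toFun x := Sum.elim
    (Sum.elim (fun q => Nx q * Dx N (fun r => x.1 (Sum.inl r) + x.2 r) q)
      (Sum.elim (fun q => Ny q * Dy N (fun r => x.1 (Sum.inl r) + x.2 r) q)
        (fun q => Nz q * Dz N (fun r => x.1 (Sum.inl r) + x.2 r) q)))
    (Sum.elim (fun q => Px q * Dx N (fun r => x.1 (Sum.inr r) - x.2 r) q)
      (Sum.elim (fun q => Py q * Dy N (fun r => x.1 (Sum.inr r) - x.2 r) q)
        (fun q => Pz q * Dz N (fun r => x.1 (Sum.inr r) - x.2 r) q)))
  map_add' x y := by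
    ext j
    rcases j with (j | j | j) | (j | j | j) <;> simp [Dx, Dy, Dz] <;> ring
  map_smul' c x := by
    ext j
    rcases j with (j | j | j) | (j | j | j) <;> simp [Dx, Dy, Dz] <;> ring

/-- Gradient together with the sum. -/
noncomputable def rMap (N : ℕ) [NeZero N] :
    (GridIdx N → ℝ) →ₗ[ℝ] (((GridIdx N ⊕ GridIdx N ⊕ GridIdx N) ⊕ Unit) → ℝ) where
  toFun φ := Sum.elim (Sum.elim (Dx N φ) (Sum.elim (Dy N φ) (Dz N φ))) (fun _ => ∑ q, φ q)
  map_add' x y := by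
    ext j
    rcases j with (j | j | j) | j <;> simp [Dx, Dy, Dz, Finset.sum_add_distrib] <;> ring
  map_smul' c x := by
    ext j
    rcases j with (j | j | j) | j <;> simp [Dx, Dy, Dz, Finset.mul_sum] <;> ring

lemma rMap_ker : LinearMap.ker (rMap N) = ⊥ := by
  rw [LinearMap.ker_eq_bot']
  intro φ h
  have hx : ∀ q, Dx N φ q = 0 := fun q => congrFun h (Sum.inl (Sum.inl q))
  have hy : ∀ q, Dy N φ q = 0 := fun q => congrFun h (Sum.inl (Sum.inr (Sum.inl q)))
  have hz : ∀ q, Dz N φ q = 0 := fun q => congrFun h (Sum.inl (Sum.inr (Sum.inr q)))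
  have hs : ∑ q, φ q = 0 := congrFun h (Sum.inr ())
  exact zero_of_const φ (const_of_D_zero φ hx hy hz) hs

lemma mMap_sum (dt : ℝ) (hdt : 0 < dt) (Mx My Mz Px Py Pz : GridIdx N → ℝ)
    (hMx : ∀ q, 0 ≤ Mx q) (hMy : ∀ q, 0 ≤ My q) (hMz : ∀ q, 0 ≤ Mz q)
    (hPx : ∀ q, 0 ≤ Px q) (hPy : ∀ q, 0 ≤ Py q) (hPz : ∀ q, 0 ≤ Pz q)
    (x y : ((GridIdx N ⊕ GridIdx N) → ℝ) × (GridIdx N → ℝ)) :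
    let m := mMap (fun q => √(dt / 2 * Mx q)) (fun q => √(dt / 2 * My q))
      (fun q => √(dt / 2 * Mz q)) (fun q => √(dt / 2 * Px q)) (fun q => √(dt / 2 * Py q))
      (fun q => √(dt / 2 * Pz q))
    ∑ j, 2 * (m x j * m y j) =
      dt * dirM N Mx My Mz (fun r => x.1 (Sum.inl r) + x.2 r) (fun r => y.1 (Sum.inl r) + y.2 r)
      + dt * dirM N Px Py Pz (fun r => x.1 (Sum.inr r) - x.2 r)
          (fun r => y.1 (Sum.inr r) - y.2 r) := by
  intro m
  have key : ∀ (M : ℝ), 0 ≤ M → ∀ a b : ℝ,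
      2 * (√(dt / 2 * M) * a * (√(dt / 2 * M) * b)) = dt * (M * a * b) := by
    intro M hM a b
    have h := Real.mul_self_sqrt (show 0 ≤ dt / 2 * M by positivity)
    linear_combination 2 * a * b * h
  simp only [Fintype.sum_sum_type, m, mMap, LinearMap.coe_mk, AddHom.coe_mk, Sum.elim_inl,
    Sum.elim_inr, key _ (hMx _), key _ (hMy _), key _ (hMz _), key _ (hPx _), key _ (hPy _),
    key _ (hPz _)]
  simp only [dirM, Finset.sum_add_distrib, ← Finset.mul_sum]
  ring

lemma rMap_sum (φ ψ : GridIdx N → ℝ) :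
    ∑ j, 2 * (rMap N φ j * rMap N ψ j) =
      2 * dirM N (fun _ => 1) (fun _ => 1) (fun _ => 1) φ ψ + 2 * ((∑ q, φ q) * ∑ q, ψ q) := by
  simp only [Fintype.sum_sum_type, rMap, LinearMap.coe_mk, AddHom.coe_mk, Sum.elim_inl,
    Sum.elim_inr, dirM, Finset.sum_add_distrib, ← Finset.mul_sum, one_mul]
  simp
  ring

lemma eq_of_test (f g : GridIdx N → ℝ) (h : ∀ η : GridIdx N → ℝ, ∑ q, f q * η q = ∑ q, g q * η q)
    (q : GridIdx N) : f q = g q := by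
  classical
  have := h (Pi.single q 1)
  simpa [Pi.single_apply] using this

lemma exists_sol (dt : ℝ) (hdt : 0 < dt) (Mx My Mz Px Py Pz : GridIdx N → ℝ)
    (hMx : ∀ q, 0 ≤ Mx q) (hMy : ∀ q, 0 ≤ My q) (hMz : ∀ q, 0 ≤ Mz q)
    (hPx : ∀ q, 0 ≤ Px q) (hPy : ∀ q, 0 ≤ Py q) (hPz : ∀ q, 0 ≤ Pz q)
    (n0 p0 : GridIdx N → ℝ) (hn0 : ∀ q, 0 < n0 q) (hp0 : ∀ q, 0 < p0 q)
    (hz : ∑ q, n0 q = ∑ q, p0 q) :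
    ∃ n p φ : GridIdx N → ℝ, (∀ q, 0 < n q) ∧ (∀ q, 0 < p q) ∧ ∑ q, n q = ∑ q, p q ∧
      ∑ q, φ q = 0 ∧
      (∀ q, -lap N φ q = (n q + n0 q) / 2 - (p q + p0 q) / 2) ∧
      (∀ q, n q - n0 q = dt * divM N Mx My Mz (fun r => gg dt (n0 r) (n r) + φ r) q) ∧
      (∀ q, p q - p0 q = dt * divM N Px Py Pz (fun r => gg dt (p0 r) (p r) - φ r) q) := by
  let a : GridIdx N ⊕ GridIdx N → ℝ := Sum.elim n0 p0
  have ha : ∀ i, 0 < a i := by rintro (i | i) <;> simp [a, hn0, hp0]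
  choose Γ hΓc hΓm hΓpos hΓ1 hΓ2 using fun i => exists_inv dt (a i) hdt (ha i)
  choose θ c C hc hθ hco using fun i => exists_prim dt (a i) (ha i) (Γ i) (hΓc i) (hΓm i) (hΓ2 i)
  let b : (GridIdx N → ℝ) →ₗ[ℝ] ℝ :=
    { toFun := fun φ => ∑ q, 2 * (n0 q - p0 q) * φ q
      map_add' := fun x y => by simp [mul_add, Finset.sum_add_distrib]
      map_smul' := fun t x => by
        simp only [Pi.smul_apply, smul_eq_mul, RingHom.id_apply, Finset.mul_sum]
        exact Finset.sum_congr rfl fun q _ => by ring }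
  obtain ⟨w, φ, hcrit⟩ := exists_crit θ (fun i w => Γ i w - a i) c C hc hθ hco
    (mMap (fun q => √(dt / 2 * Mx q)) (fun q => √(dt / 2 * My q))
      (fun q => √(dt / 2 * Mz q)) (fun q => √(dt / 2 * Px q)) (fun q => √(dt / 2 * Py q))
      (fun q => √(dt / 2 * Pz q))) (rMap N) rMap_ker b
  simp only [mMap_sum dt hdt Mx My Mz Px Py Pz hMx hMy hMz hPx hPy hPz, rMap_sum] at hcrit
  set n : GridIdx N → ℝ := fun q => Γ (Sum.inl q) (w (Sum.inl q)) with hn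
  set p : GridIdx N → ℝ := fun q => Γ (Sum.inr q) (w (Sum.inr q)) with hp
  have hwn : ∀ q, gg dt (n0 q) (n q) = w (Sum.inl q) := fun q => hΓ1 (Sum.inl q) _
  have hwp : ∀ q, gg dt (p0 q) (p q) = w (Sum.inr q) := fun q => hΓ1 (Sum.inr q) _
  have hz0 : ∀ (A B C μ : GridIdx N → ℝ), dirM N A B C μ (fun _ => 0) = 0 := by
    intro A B C μ; simp [dirM, Dx, Dy, Dz]
  have hz0' : ∀ (A B C μ : GridIdx N → ℝ), dirM N A B C μ 0 = 0 := hz0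
  have hneg : ∀ (A B C μ ψ : GridIdx N → ℝ),
      dirM N A B C μ (fun q => - ψ q) = - dirM N A B C μ ψ := by
    intro A B C μ ψ
    simp only [dirM, ← Finset.sum_neg_distrib]
    exact Finset.sum_congr rfl fun q _ => by simp only [Dx, Dy, Dz]; ring
  have weakn : ∀ η : GridIdx N → ℝ, ∑ q, (n q - n0 q) * η q
      + dt * dirM N Mx My Mz (fun r => w (Sum.inl r) + φ r) η = 0 := by
    intro η
    have := hcrit (Sum.elim η 0) 0
    simpa [Fintype.sum_sum_type, hz0, hz0', a] using this
  have weakp : ∀ η : GridIdx N → ℝ, ∑ q, (p q - p0 q) * η q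
      + dt * dirM N Px Py Pz (fun r => w (Sum.inr r) - φ r) η = 0 := by
    intro η
    have := hcrit (Sum.elim 0 η) 0
    simpa [Fintype.sum_sum_type, hz0, hz0', a] using this
  have weakφ : ∀ ψ : GridIdx N → ℝ,
      dt * dirM N Mx My Mz (fun r => w (Sum.inl r) + φ r) ψ
      - dt * dirM N Px Py Pz (fun r => w (Sum.inr r) - φ r) ψ
      + 2 * dirM N (fun _ => 1) (fun _ => 1) (fun _ => 1) φ ψ + 2 * ((∑ q, φ q) * ∑ q, ψ q)
      - ∑ q, 2 * (n0 q - p0 q) * ψ q = 0 := by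
    intro ψ
    have := hcrit 0 ψ
    simp [hneg, b] at this
    linarith
  have sn : ∑ q, n q = ∑ q, n0 q := by
    have := weakn (fun _ => 1)
    rw [dirM_one] at this
    simp only [mul_one, mul_zero, add_zero, Finset.sum_sub_distrib] at this
    linarith
  have sp : ∑ q, p q = ∑ q, p0 q := by
    have := weakp (fun _ => 1)
    rw [dirM_one] at this
    simp only [mul_one, mul_zero, add_zero, Finset.sum_sub_distrib] at this
    linarith
  have sφ : ∑ q, φ q = 0 := by
    have := weakφ (fun _ => 1)
    simp only [dirM_one, mul_one, ← Finset.mul_sum, Finset.sum_sub_distrib, hz] at this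
    have hcard : ∑ q : GridIdx N, (1 : ℝ) ≠ 0 := by
      simp [NeZero.ne N]
    have h2 : (∑ q, φ q) * ∑ q : GridIdx N, (1 : ℝ) = 0 := by linarith
    exact (mul_eq_zero.1 h2).resolve_right hcard
  refine ⟨n, p, φ, fun q => hΓpos _ _, fun q => hΓpos _ _, by rw [sn, sp, hz], sφ, ?_, ?_, ?_⟩
  · apply eq_of_test
    intro ψ
    have h1 := weakn ψ
    have h2 := weakp ψ
    have h3 := weakφ ψ
    have h4 := divM_parts (fun _ => 1) (fun _ => 1) (fun _ => 1) φ ψ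
    simp only [← lap_eq_divM] at h4
    rw [sφ] at h3
    simp only [neg_mul, Finset.sum_neg_distrib]
    have h5 : ∑ q, ((n q + n0 q) / 2 - (p q + p0 q) / 2) * ψ q =
        (∑ q, (n q - n0 q) * ψ q) / 2 - (∑ q, (p q - p0 q) * ψ q) / 2
          + (∑ q, 2 * (n0 q - p0 q) * ψ q) / 2 := by
      simp only [Finset.sum_div, ← Finset.sum_sub_distrib, ← Finset.sum_add_distrib]
      exact Finset.sum_congr rfl fun q _ => by ring
    rw [h5]
    linarith
  · simp only [hwn]
    apply eq_of_test
    intro η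
    have h1 := weakn η
    have h4 := divM_parts Mx My Mz (fun r => w (Sum.inl r) + φ r) η
    simp only [mul_assoc, ← Finset.mul_sum]
    rw [h4]; linarith
  · simp only [hwp]
    apply eq_of_test
    intro η
    have h1 := weakp η
    have h4 := divM_parts Px Py Pz (fun r => w (Sum.inr r) - φ r) η
    simp only [mul_assoc, ← Finset.mul_sum]
    rw [h4]; linarith

lemma gg_term_nonneg (dt a x y : ℝ) (hdt : 0 < dt) (ha : 0 < a) (hx : 0 < x) (hy : 0 < y) :
    0 ≤ (x - y) * (gg dt a x - gg dt a y) ∧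
      ((x - y) * (gg dt a x - gg dt a y) = 0 → x = y) := by
  rcases lt_trichotomy x y with h | h | h
  · have := gg_strict dt a x y hdt ha hx h
    have h2 := mul_pos_of_neg_of_neg (sub_neg.2 h) (sub_neg.2 this)
    exact ⟨h2.le, fun h3 => absurd h3 h2.ne'⟩
  · subst h; simp
  · have := gg_strict dt a y x hdt ha hy h
    have h2 := mul_pos (sub_pos.2 h) (sub_pos.2 this)
    exact ⟨h2.le, fun h3 => absurd h3 h2.ne'⟩

lemma unique_sol (dt : ℝ) (hdt : 0 < dt) (Mx My Mz Px Py Pz : GridIdx N → ℝ)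
    (hMx : ∀ q, 0 ≤ Mx q) (hMy : ∀ q, 0 ≤ My q) (hMz : ∀ q, 0 ≤ Mz q)
    (hPx : ∀ q, 0 ≤ Px q) (hPy : ∀ q, 0 ≤ Py q) (hPz : ∀ q, 0 ≤ Pz q)
    (n0 p0 : GridIdx N → ℝ) (hn0 : ∀ q, 0 < n0 q) (hp0 : ∀ q, 0 < p0 q)
    (n p φ n' p' φ' : GridIdx N → ℝ)
    (hn : ∀ q, 0 < n q) (hp : ∀ q, 0 < p q) (hn' : ∀ q, 0 < n' q) (hp' : ∀ q, 0 < p' q)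
    (h1 : ∀ q, -lap N φ q = (n q + n0 q) / 2 - (p q + p0 q) / 2)
    (h2 : ∀ q, n q - n0 q = dt * divM N Mx My Mz (fun r => gg dt (n0 r) (n r) + φ r) q)
    (h3 : ∀ q, p q - p0 q = dt * divM N Px Py Pz (fun r => gg dt (p0 r) (p r) - φ r) q)
    (h1' : ∀ q, -lap N φ' q = (n' q + n0 q) / 2 - (p' q + p0 q) / 2)
    (h2' : ∀ q, n' q - n0 q = dt * divM N Mx My Mz (fun r => gg dt (n0 r) (n' r) + φ' r) q)
    (h3' : ∀ q, p' q - p0 q = dt * divM N Px Py Pz (fun r => gg dt (p0 r) (p' r) - φ' r) q) :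
    n = n' ∧ p = p' := by
  have en : ∑ q, (n q - n' q) * ((gg dt (n0 q) (n q) + φ q) - (gg dt (n0 q) (n' q) + φ' q)) ≤ 0 := by
    have h4 := divM_parts Mx My Mz (fun q => (gg dt (n0 q) (n q) + φ q) - (gg dt (n0 q) (n' q) + φ' q))
      (fun q => (gg dt (n0 q) (n q) + φ q) - (gg dt (n0 q) (n' q) + φ' q))
    have h5 := dirM_self_nonneg Mx My Mz
      (fun q => (gg dt (n0 q) (n q) + φ q) - (gg dt (n0 q) (n' q) + φ' q)) hMx hMy hMz
    have h6 : ∀ q, n q - n' q = dt * divM N Mx My Mz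
        (fun q => (gg dt (n0 q) (n q) + φ q) - (gg dt (n0 q) (n' q) + φ' q)) q := fun q => by
      rw [divM_sub Mx My Mz (fun q => gg dt (n0 q) (n q) + φ q)]
      linarith [h2 q, h2' q]
    rw [Finset.sum_congr rfl fun q _ => by rw [h6 q, mul_assoc], ← Finset.mul_sum, h4]
    nlinarith
  have ep : ∑ q, (p q - p' q) * ((gg dt (p0 q) (p q) - φ q) - (gg dt (p0 q) (p' q) - φ' q)) ≤ 0 := by
    have h4 := divM_parts Px Py Pz (fun q => (gg dt (p0 q) (p q) - φ q) - (gg dt (p0 q) (p' q) - φ' q))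
      (fun q => (gg dt (p0 q) (p q) - φ q) - (gg dt (p0 q) (p' q) - φ' q))
    have h5 := dirM_self_nonneg Px Py Pz
      (fun q => (gg dt (p0 q) (p q) - φ q) - (gg dt (p0 q) (p' q) - φ' q)) hPx hPy hPz
    have h6 : ∀ q, p q - p' q = dt * divM N Px Py Pz
        (fun q => (gg dt (p0 q) (p q) - φ q) - (gg dt (p0 q) (p' q) - φ' q)) q := fun q => by
      rw [divM_sub Px Py Pz (fun q => gg dt (p0 q) (p q) - φ q)]
      linarith [h3 q, h3' q]
    rw [Finset.sum_congr rfl fun q _ => by rw [h6 q, mul_assoc], ← Finset.mul_sum, h4]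
    nlinarith
  have eφ : 0 ≤ ∑ q, ((n q - n' q) - (p q - p' q)) * (φ q - φ' q) := by
    have h4 := divM_parts (fun _ => 1) (fun _ => 1) (fun _ => 1) (fun q => φ q - φ' q)
      (fun q => φ q - φ' q)
    have h5 := dirM_self_nonneg (fun _ => 1) (fun _ => 1) (fun _ => 1) (fun q => φ q - φ' q)
      (fun _ => zero_le_one) (fun _ => zero_le_one) (fun _ => zero_le_one)
    simp only [← lap_eq_divM] at h4
    have h6 : ∀ q, (n q - n' q) - (p q - p' q) = (-2) * lap N (fun q => φ q - φ' q) q := fun q => by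
      rw [lap_sub]
      linarith [h1 q, h1' q]
    rw [Finset.sum_congr rfl fun q _ => by rw [h6 q, mul_assoc], ← Finset.mul_sum, h4]
    linarith
  have tn : ∀ q, _ := fun q => gg_term_nonneg dt (n0 q) (n q) (n' q) hdt (hn0 q) (hn q) (hn' q)
  have tp : ∀ q, _ := fun q => gg_term_nonneg dt (p0 q) (p q) (p' q) hdt (hp0 q) (hp q) (hp' q)
  have tot : ∑ q, (n q - n' q) * (gg dt (n0 q) (n q) - gg dt (n0 q) (n' q)) +
      ∑ q, (p q - p' q) * (gg dt (p0 q) (p q) - gg dt (p0 q) (p' q)) ≤ 0 := by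
    have : ∑ q, (n q - n' q) * (gg dt (n0 q) (n q) - gg dt (n0 q) (n' q)) +
      ∑ q, (p q - p' q) * (gg dt (p0 q) (p q) - gg dt (p0 q) (p' q)) =
      ∑ q, (n q - n' q) * ((gg dt (n0 q) (n q) + φ q) - (gg dt (n0 q) (n' q) + φ' q)) +
      ∑ q, (p q - p' q) * ((gg dt (p0 q) (p q) - φ q) - (gg dt (p0 q) (p' q) - φ' q)) -
      ∑ q, ((n q - n' q) - (p q - p' q)) * (φ q - φ' q) := by
      simp only [← Finset.sum_sub_distrib, ← Finset.sum_add_distrib]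
      exact Finset.sum_congr rfl fun q _ => by ring
    linarith
  have pn := Finset.sum_nonneg fun q (_ : q ∈ Finset.univ) => (tn q).1
  have pp := Finset.sum_nonneg fun q (_ : q ∈ Finset.univ) => (tp q).1
  have zn := (Finset.sum_eq_zero_iff_of_nonneg fun q _ => (tn q).1).1 (by linarith)
  have zp := (Finset.sum_eq_zero_iff_of_nonneg fun q _ => (tp q).1).1 (by linarith)
  exact ⟨funext fun q => (tn q).2 (zn q (Finset.mem_univ q)),
    funext fun q => (tp q).2 (zp q (Finset.mem_univ q))⟩

lemma scheme_reduce (dt Dc : ℝ) (hdt : 0 < dt) (n0 nm1 p0 pm1 n1 p1 : GridIdx N → ℝ)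
    (h : SolvesScheme N dt Dc n0 nm1 p0 pm1 n1 p1) : ∃ φ : GridIdx N → ℝ,
      (∀ q, -lap N φ q = (n1 q + n0 q) / 2 - (p1 q + p0 q) / 2) ∧
      (∀ q, n1 q - n0 q = dt * divM N (mobX N dt n0 nm1) (mobY N dt n0 nm1) (mobZ N dt n0 nm1)
        (fun r => gg dt (n0 r) (n1 r) + φ r) q) ∧
      (∀ q, p1 q - p0 q = dt * divM N
        (mobX N dt (fun s => Dc * p0 s) (fun s => Dc * pm1 s))
        (mobY N dt (fun s => Dc * p0 s) (fun s => Dc * pm1 s))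
        (mobZ N dt (fun s => Dc * p0 s) (fun s => Dc * pm1 s))
        (fun r => gg dt (p0 r) (p1 r) - φ r) q) := by
  obtain ⟨μn, μp, φn, φp, z1, l1, z2, l2, e1, e2, m1, m2⟩ := h
  have hs : (fun q => φn q + φp q) = 0 := by
    apply zero_of_lap
    · intro q
      rw [lap_add]
      linarith [l1 q, l2 q]
    · unfold zeroMean at z1 z2
      rw [Finset.sum_add_distrib, z1, z2, add_zero]
  have hs' : ∀ q, φp q = - φn q := fun q => by
    have := congrFun hs q
    simp only [Pi.zero_apply] at this
    linarith
  have e1' : (fun r => gg dt (n0 r) (n1 r) + φn r) = μn := funext fun q => by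
    rw [e1 q]; rfl
  have e2' : (fun r => gg dt (p0 r) (p1 r) - φn r) = μp := funext fun q => by
    rw [e2 q, hs' q]; simp only [gg]; ring
  refine ⟨φn, l1, fun q => ?_, fun q => ?_⟩
  · rw [e1']
    have := m1 q
    rw [div_eq_iff hdt.ne'] at this
    rw [this, mul_comm]; rfl
  · rw [e2']
    have := m2 q
    rw [div_eq_iff hdt.ne'] at this
    rw [this, mul_comm]; rfl

end PNP

/-- Unique positive solvability of the second-order scheme. -/
theorem stmt9 (N : ℕ) [NeZero N] (dt Dc : ℝ) (hdt : 0 < dt) (hD : 0 < Dc)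
    (n0 nm1 p0 pm1 : GridIdx N → ℝ)
    (hn0 : ∀ q, 0 < n0 q) (hnm1 : ∀ q, 0 < nm1 q)
    (hp0 : ∀ q, 0 < p0 q) (hpm1 : ∀ q, 0 < pm1 q)
    (hzm0 : zeroMean N (fun q => n0 q - p0 q))
    (hzm1 : zeroMean N (fun q => nm1 q - pm1 q)) :
    ∃! np : (GridIdx N → ℝ) × (GridIdx N → ℝ),
      (∀ q, 0 < np.1 q) ∧ (∀ q, 0 < np.2 q) ∧
      zeroMean N (fun q => np.1 q - np.2 q) ∧
      SolvesScheme N dt Dc n0 nm1 p0 pm1 np.1 np.2 := by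

  have hMx : ∀ (a b : GridIdx N → ℝ) q, 0 ≤ mobX N dt a b q := fun _ _ _ => Real.sqrt_nonneg _
  have hMy : ∀ (a b : GridIdx N → ℝ) q, 0 ≤ mobY N dt a b q := fun _ _ _ => Real.sqrt_nonneg _
  have hMz : ∀ (a b : GridIdx N → ℝ) q, 0 ≤ mobZ N dt a b q := fun _ _ _ => Real.sqrt_nonneg _
  have hz : ∑ q, n0 q = ∑ q, p0 q := by
    unfold zeroMean at hzm0
    rw [Finset.sum_sub_distrib] at hzm0
    linarith
  obtain ⟨n, p, φ, hn, hp, hs, sφ, l, e1, e2⟩ := exists_sol dt hdt _ _ _ _ _ _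
    (hMx n0 nm1) (hMy n0 nm1) (hMz n0 nm1)
    (hMx (fun s => Dc * p0 s) (fun s => Dc * pm1 s))
    (hMy (fun s => Dc * p0 s) (fun s => Dc * pm1 s))
    (hMz (fun s => Dc * p0 s) (fun s => Dc * pm1 s)) n0 p0 hn0 hp0 hz
  refine ⟨(n, p), ⟨hn, hp, ?_, ?_⟩, ?_⟩
  · unfold zeroMean
    simp only [Finset.sum_sub_distrib, hs, sub_self]
  · refine ⟨fun r => gg dt (n0 r) (n r) + φ r, fun r => gg dt (p0 r) (p r) - φ r,
      φ, fun q => - φ q, sφ, l, ?_, fun q => ?_, fun q => rfl, fun q => ?_, fun q => ?_,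
      fun q => ?_⟩
    · unfold zeroMean
      rw [Finset.sum_neg_distrib, sφ, neg_zero]
    · rw [lap_neg]
      linarith [l q]
    · simp only [gg]; ring
    · rw [div_eq_iff hdt.ne']
      change n q - n0 q = _
      rw [e1 q, mul_comm]; rfl
    · rw [div_eq_iff hdt.ne']
      change p q - p0 q = _
      rw [e2 q, mul_comm]; rfl
  · rintro ⟨n', p'⟩ ⟨hn', hp', -, hsol⟩
    obtain ⟨φ', l', e1', e2'⟩ := scheme_reduce dt Dc hdt n0 nm1 p0 pm1 n' p' hsol
    obtain ⟨h1, h2⟩ := unique_sol dt hdt _ _ _ _ _ _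
      (hMx n0 nm1) (hMy n0 nm1) (hMz n0 nm1)
      (hMx (fun s => Dc * p0 s) (fun s => Dc * pm1 s))
      (hMy (fun s => Dc * p0 s) (fun s => Dc * pm1 s))
      (hMz (fun s => Dc * p0 s) (fun s => Dc * pm1 s)) n0 p0 hn0 hp0
      n' p' φ' n p φ hn' hp' hn hp l' e1' e2' l e1 e2
    rw [Prod.mk.injEq]
    exact ⟨h1, h2⟩
end

section
/- Let n^m, n^{m−1}, p^m, p^{m−1} be pointwise-positive periodic grid functions such that n^m − p^m and n^{m−1} − p^{m−1} have zero mean, and let (n^{m+1}, p^{m+1}) be a pointwise-positive solution of the scheme with n^{m+1} − p^{m+1} of zero mean, with associated chemical potentials μ_n, μ_p. Set R = Δt·h³·Σ_{i,j,k} (M̆_n^x·(D_x μ_n)² + M̆_n^y·(D_y μ_n)² + M̆_n^z·(D_z μ_n)² + M̆_p^x·(D_x μ_p)² + M̆_p^y·(D_y μ_p)² + M̆_p^z·(D_z μ_p)²). Then R ≥ 0 and E_h(n^{m+1}, p^{m+1}) + R ≤ E_h(n^m, p^m); in particular E_h(n^{m+1}, p^{m+1}) ≤ E_h(n^m, p^m).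 -/
open scoped BigOperators

open PNP

namespace PNP

theorem sbp_x (N : ℕ) [NeZero N] (f g : GridIdx N → ℝ) :
    ∑ q, f q * dxm N g q = - ∑ q, Dx N f q * g q := by
  have key : ∑ q : GridIdx N, f q * g (xsh q (-1)) = ∑ q : GridIdx N, f (xsh q 1) * g q := by
    refine Fintype.sum_equiv (⟨fun q => xsh q (-1), fun q => xsh q 1, ?_, ?_⟩ : GridIdx N ≃ GridIdx N) _ _ ?_
    · intro q; simp [xsh]
    · intro q; simp [xsh]
    · intro q; simp [xsh]
  simp only [dxm, Dx, mul_sub, sub_mul, ← mul_assoc, Finset.sum_sub_distrib]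
  simp only [mul_right_comm _ (N : ℝ), ← Finset.sum_mul, key]
  ring

theorem sbp_y (N : ℕ) [NeZero N] (f g : GridIdx N → ℝ) :
    ∑ q, f q * dym N g q = - ∑ q, Dy N f q * g q := by
  have key : ∑ q : GridIdx N, f q * g (ysh q (-1)) = ∑ q : GridIdx N, f (ysh q 1) * g q := by
    refine Fintype.sum_equiv (⟨fun q => ysh q (-1), fun q => ysh q 1, ?_, ?_⟩ : GridIdx N ≃ GridIdx N) _ _ ?_
    · intro q; simp [ysh]
    · intro q; simp [ysh]
    · intro q; simp [ysh]
  simp only [dym, Dy, mul_sub, sub_mul, ← mul_assoc, Finset.sum_sub_distrib]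
  simp only [mul_right_comm _ (N : ℝ), ← Finset.sum_mul, key]
  ring

theorem sbp_z (N : ℕ) [NeZero N] (f g : GridIdx N → ℝ) :
    ∑ q, f q * dzm N g q = - ∑ q, Dz N f q * g q := by
  have key : ∑ q : GridIdx N, f q * g (zsh q (-1)) = ∑ q : GridIdx N, f (zsh q 1) * g q := by
    refine Fintype.sum_equiv (⟨fun q => zsh q (-1), fun q => zsh q 1, ?_, ?_⟩ : GridIdx N ≃ GridIdx N) _ _ ?_
    · intro q; simp [zsh]
    · intro q; simp [zsh]
    · intro q; simp [zsh]
  simp only [dzm, Dz, mul_sub, sub_mul, ← mul_assoc, Finset.sum_sub_distrib]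
  simp only [mul_right_comm _ (N : ℝ), ← Finset.sum_mul, key]
  ring

/-- Summation by parts for a divergence. -/
theorem sbp (N : ℕ) [NeZero N] (f a b c : GridIdx N → ℝ) :
    ∑ q, f q * (dxm N a q + dym N b q + dzm N c q) =
      - ∑ q, (Dx N f q * a q + Dy N f q * b q + Dz N f q * c q) := by
  simp only [mul_add, Finset.sum_add_distrib, sbp_x, sbp_y, sbp_z]
  ring

theorem lap_symm (N : ℕ) [NeZero N] (f g : GridIdx N → ℝ) :
    ∑ q, f q * lap N g q = ∑ q, g q * lap N f q := by
  simp only [lap, sbp]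
  congr 1
  exact Finset.sum_congr rfl fun q _ => by ring

theorem D_zero (N : ℕ) [NeZero N] (f : GridIdx N → ℝ) (hf : ∀ q, lap N f q = 0) (q) :
    Dx N f q = 0 ∧ Dy N f q = 0 ∧ Dz N f q = 0 := by
  have h : ∑ q, f q * lap N f q = 0 := by simp [hf]
  simp only [lap, sbp, neg_eq_zero] at h
  rw [Finset.sum_eq_zero_iff_of_nonneg (fun q _ => by
    nlinarith [mul_self_nonneg (Dx N f q), mul_self_nonneg (Dy N f q),
      mul_self_nonneg (Dz N f q)])] at h
  have h1 := h q (Finset.mem_univ q)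
  have hx := mul_self_nonneg (Dx N f q)
  have hy := mul_self_nonneg (Dy N f q)
  have hz := mul_self_nonneg (Dz N f q)
  exact ⟨mul_self_eq_zero.1 (by linarith), mul_self_eq_zero.1 (by linarith),
    mul_self_eq_zero.1 (by linarith)⟩

theorem G1_mul (a x : ℝ) : (x - a) * G1 a x = x * Real.log x - a * Real.log a := by
  unfold G1
  split_ifs with h
  · subst h; ring
  · exact mul_div_cancel₀ _ (sub_ne_zero.2 h)

theorem log_term (a x : ℝ) (ha : 0 < a) (hx : 0 < x) :
    0 ≤ (x - a) * (Real.log x - Real.log a) := by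
  rcases le_total a x with h | h
  · exact mul_nonneg (by linarith) (sub_nonneg.2 (Real.log_le_log ha h))
  · exact mul_nonneg_of_nonpos_of_nonpos (by linarith) (sub_nonpos.2 (Real.log_le_log hx h))

/-- Per-species identity and inequality. -/
theorem species (N : ℕ) [NeZero N] (dt : ℝ) (hdt : 0 < dt)
    (u0 u1 μ φ a b c : GridIdx N → ℝ) (h0 : ∀ q, 0 < u0 q) (h1 : ∀ q, 0 < u1 q)
    (hμ : ∀ q, μ q = G1 (u0 q) (u1 q) - 1
      + dt * (Real.log (u1 q) - Real.log (u0 q)) + φ q)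
    (he : ∀ q, (u1 q - u0 q) / dt =
      dxm N (fun r => a r * Dx N μ r) q + dym N (fun r => b r * Dy N μ r) q +
      dzm N (fun r => c r * Dz N μ r) q) :
    ∑ q, u1 q * Real.log (u1 q) + ∑ q, (u1 q - u0 q) * φ q
      + dt * ∑ q, (a q * Dx N μ q ^ 2 + b q * Dy N μ q ^ 2 + c q * Dz N μ q ^ 2)
      ≤ ∑ q, u0 q * Real.log (u0 q) := by
  have hw : ∀ f : GridIdx N → ℝ, ∑ q, (u1 q - u0 q) * f q = - (dt * ∑ q,
      (Dx N f q * (a q * Dx N μ q) + Dy N f q * (b q * Dy N μ q)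
        + Dz N f q * (c q * Dz N μ q))) := by
    intro f
    rw [← mul_neg, ← sbp N f, Finset.mul_sum]
    refine Finset.sum_congr rfl fun q _ => ?_
    rw [← he q]
    field_simp
  have hμs := hw μ
  have hone := hw (fun _ => 1)
  simp only [Dx, Dy, Dz, sub_self, zero_mul, add_zero, Finset.sum_const_zero, mul_zero,
    neg_zero, mul_one] at hone
  have e1 : ∑ q, (Dx N μ q * (a q * Dx N μ q) + Dy N μ q * (b q * Dy N μ q)
        + Dz N μ q * (c q * Dz N μ q)) =
      ∑ q, (a q * Dx N μ q ^ 2 + b q * Dy N μ q ^ 2 + c q * Dz N μ q ^ 2) :=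
    Finset.sum_congr rfl fun q _ => by ring
  rw [e1] at hμs
  have e2 : ∑ q, (u1 q - u0 q) * μ q = ∑ q, u1 q * Real.log (u1 q)
      - ∑ q, u0 q * Real.log (u0 q) - ∑ q, (u1 q - u0 q)
      + dt * ∑ q, (u1 q - u0 q) * (Real.log (u1 q) - Real.log (u0 q))
      + ∑ q, (u1 q - u0 q) * φ q := by
    rw [Finset.mul_sum, ← Finset.sum_sub_distrib, ← Finset.sum_sub_distrib,
      ← Finset.sum_add_distrib, ← Finset.sum_add_distrib]
    refine Finset.sum_congr rfl fun q _ => ?_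
    rw [hμ q]
    linear_combination G1_mul (u0 q) (u1 q)
  have e3 : 0 ≤ dt * ∑ q, (u1 q - u0 q) * (Real.log (u1 q) - Real.log (u0 q)) :=
    mul_nonneg hdt.le (Finset.sum_nonneg fun q _ => log_term _ _ (h0 q) (h1 q))
  linarith

end PNP

/-- Energy stability: `E_h(n^{m+1}, p^{m+1}) + R ≤ E_h(n^m, p^m)` with `R ≥ 0`. -/
theorem stmt10 (N : ℕ) [NeZero N] (dt Dc : ℝ) (hdt : 0 < dt) (hD : 0 < Dc)
    (n0 nm1 p0 pm1 n1 p1 μn μp : GridIdx N → ℝ)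
    (hn0 : ∀ q, 0 < n0 q) (hnm1 : ∀ q, 0 < nm1 q)
    (hp0 : ∀ q, 0 < p0 q) (hpm1 : ∀ q, 0 < pm1 q)
    (hn1 : ∀ q, 0 < n1 q) (hp1 : ∀ q, 0 < p1 q)
    (hzm0 : zeroMean N (fun q => n0 q - p0 q))
    (hzm1 : zeroMean N (fun q => nm1 q - pm1 q))
    (hzm2 : zeroMean N (fun q => n1 q - p1 q))
    (hsol : SolvesSchemeWith N dt Dc n0 nm1 p0 pm1 n1 p1 μn μp)
    (ψ1 ψ0 : GridIdx N → ℝ)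
    (hψ1 : zeroMean N ψ1) (hψ1e : ∀ q, -lap N ψ1 q = n1 q - p1 q)
    (hψ0 : zeroMean N ψ0) (hψ0e : ∀ q, -lap N ψ0 q = n0 q - p0 q) :
    let R : ℝ := dt * (((1 : ℝ) / N) ^ 3 * ∑ q : GridIdx N,
      (mobX N dt n0 nm1 q * (Dx N μn q) ^ 2
       + mobY N dt n0 nm1 q * (Dy N μn q) ^ 2
       + mobZ N dt n0 nm1 q * (Dz N μn q) ^ 2
       + mobX N dt (fun s => Dc * p0 s) (fun s => Dc * pm1 s) q * (Dx N μp q) ^ 2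
       + mobY N dt (fun s => Dc * p0 s) (fun s => Dc * pm1 s) q * (Dy N μp q) ^ 2
       + mobZ N dt (fun s => Dc * p0 s) (fun s => Dc * pm1 s) q * (Dz N μp q) ^ 2));
    0 ≤ R ∧
      (ip N (fun q => n1 q * Real.log (n1 q) + p1 q * Real.log (p1 q)) (fun _ => (1 : ℝ))
        + (1 / 2) * ip N (fun q => n1 q - p1 q) ψ1) + R
      ≤ ip N (fun q => n0 q * Real.log (n0 q) + p0 q * Real.log (p0 q)) (fun _ => (1 : ℝ))
        + (1 / 2) * ip N (fun q => n0 q - p0 q) ψ0 := by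
  intro R
  obtain ⟨φn, φp, -, hφn, -, hφp, hμn, hμp, hen, hep⟩ := hsol
  have Sn := species N dt hdt n0 n1 μn φn _ _ _ hn0 hn1 hμn hen
  have Sp := species N dt hdt p0 p1 μp φp _ _ _ hp0 hp1 hμp hep
  have hlin : ∀ q, lap N (fun r => φn r + φp r) q = lap N φn q + lap N φp q := by
    intro q
    simp only [lap, dxm, dym, dzm, Dx, Dy, Dz]; ring
  have hD0 := D_zero N (fun r => φn r + φp r) (fun q => by
    rw [hlin]; linarith [hφn q, hφp q])
  have c1 : ∑ q, (φn q + φp q) * (p1 q - p0 q) = 0 := by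
    have := sbp N (fun r => φn r + φp r)
      (fun r => mobX N dt (fun s => Dc * p0 s) (fun s => Dc * pm1 s) r * Dx N μp r)
      (fun r => mobY N dt (fun s => Dc * p0 s) (fun s => Dc * pm1 s) r * Dy N μp r)
      (fun r => mobZ N dt (fun s => Dc * p0 s) (fun s => Dc * pm1 s) r * Dz N μp r)
    simp only [← hep, (hD0 _).1, (hD0 _).2.1, (hD0 _).2.2, zero_mul, add_zero,
      Finset.sum_const_zero, neg_zero, ← mul_div_assoc, ← Finset.sum_div] at this
    exact (div_eq_zero_iff.1 this).resolve_right hdt.ne'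
  have s1 := lap_symm N φn ψ1
  have s0 := lap_symm N φn ψ0
  have s10 := lap_symm N ψ1 ψ0
  have l1 : ∀ q, lap N ψ1 q = -(n1 q - p1 q) := fun q => by linarith [hψ1e q]
  have l0 : ∀ q, lap N ψ0 q = -(n0 q - p0 q) := fun q => by linarith [hψ0e q]
  have ln : ∀ q, lap N φn q = -(((n1 q - p1 q) + (n0 q - p0 q)) / 2) :=
    fun q => by linarith [hφn q]
  simp only [l1, l0, ln] at s1 s0 s10
  have c2 : ∑ q, (n1 q - n0 q) * φn q + ∑ q, (p1 q - p0 q) * φp q =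
      1 / 2 * ∑ q, (n1 q - p1 q) * ψ1 q - 1 / 2 * ∑ q, (n0 q - p0 q) * ψ0 q := by
    have z : ∑ q, ((n1 q - n0 q) * φn q + (p1 q - p0 q) * φp q
        - 1 / 2 * ((n1 q - p1 q) * ψ1 q) + 1 / 2 * ((n0 q - p0 q) * ψ0 q))
      = ∑ q, ((φn q + φp q) * (p1 q - p0 q)
        - (φn q * -(n1 q - p1 q) - ψ1 q * -(((n1 q - p1 q) + (n0 q - p0 q)) / 2))
        + (φn q * -(n0 q - p0 q) - ψ0 q * -(((n1 q - p1 q) + (n0 q - p0 q)) / 2))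
        - 1 / 2 * (ψ1 q * -(n0 q - p0 q) - ψ0 q * -(n1 q - p1 q))) :=
      Finset.sum_congr rfl fun q _ => by ring
    simp only [Finset.sum_add_distrib, Finset.sum_sub_distrib, ← Finset.mul_sum] at z
    linarith
  constructor
  · refine mul_nonneg hdt.le (mul_nonneg (by positivity) (Finset.sum_nonneg fun q _ => ?_))
    unfold mobX mobY mobZ
    positivity
  · have hc : (0 : ℝ) ≤ ((1 : ℝ) / N) ^ 3 := by positivity
    have tot := mul_le_mul_of_nonneg_left (add_le_add Sn Sp) hc
    have hR : R = ((1 : ℝ) / N) ^ 3 * (dt * ∑ q, (mobX N dt n0 nm1 q * (Dx N μn q) ^ 2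
       + mobY N dt n0 nm1 q * (Dy N μn q) ^ 2
       + mobZ N dt n0 nm1 q * (Dz N μn q) ^ 2)
       + dt * ∑ q, (mobX N dt (fun s => Dc * p0 s) (fun s => Dc * pm1 s) q * (Dx N μp q) ^ 2
       + mobY N dt (fun s => Dc * p0 s) (fun s => Dc * pm1 s) q * (Dy N μp q) ^ 2
       + mobZ N dt (fun s => Dc * p0 s) (fun s => Dc * pm1 s) q * (Dz N μp q) ^ 2)) := by
      simp only [R, Finset.sum_add_distrib]
      ring
    rw [hR]
    simp only [ip, mul_one]
    rw [Finset.sum_add_distrib (f := fun q => n1 q * Real.log (n1 q)),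
      Finset.sum_add_distrib (f := fun q => n0 q * Real.log (n0 q))]
    linear_combination tot - ((1 : ℝ) / N) ^ 3 * c2
end

section
/- Let n^m, n^{m−1}, p^m, p^{m−1} be pointwise-positive periodic grid functions such that n^m − p^m and n^{m−1} − p^{m−1} have zero mean, and let (n^{m+1}, p^{m+1}) be a pointwise-positive solution of the scheme with n^{m+1} − p^{m+1} of zero mean. Then the total masses are conserved: Σ_{i,j,k} n^{m+1}(i,j,k) = Σ_{i,j,k} n^m(i,j,k) and Σ_{i,j,k} p^{m+1}(i,j,k) = Σ_{i,j,k} p^m(i,j,k). -/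
open scoped BigOperators

open PNP

theorem sum_shift_aux {N : ℕ} [NeZero N] (e : GridIdx N) (s : GridIdx N → GridIdx N)
    (hs : ∀ q, s q = q + e) (f : GridIdx N → ℝ) :
    ∑ q : GridIdx N, (f q - f (s q)) * (N : ℝ) = 0 := by
  rw [← Finset.sum_mul, Finset.sum_sub_distrib]
  have h : ∑ q : GridIdx N, f (s q) = ∑ q : GridIdx N, f q := by
    simp only [hs]
    exact Equiv.sum_comp (Equiv.addRight e) f
  rw [h, sub_self, zero_mul]

theorem mass_aux {N : ℕ} [NeZero N] {dt : ℝ} (hdt : 0 < dt) (u v f g k : GridIdx N → ℝ)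
    (h : ∀ q, (u q - v q) / dt = dxm N f q + dym N g q + dzm N k q) :
    ∑ q : GridIdx N, u q = ∑ q : GridIdx N, v q := by
  have hx : ∑ q : GridIdx N, dxm N f q = 0 :=
    sum_shift_aux (-1, 0, 0) (fun q => xsh q (-1)) (fun q => by simp [xsh, Prod.ext_iff]) f
  have hy : ∑ q : GridIdx N, dym N g q = 0 :=
    sum_shift_aux (0, -1, 0) (fun q => ysh q (-1)) (fun q => by simp [ysh, Prod.ext_iff]) g
  have hz : ∑ q : GridIdx N, dzm N k q = 0 :=
    sum_shift_aux (0, 0, -1) (fun q => zsh q (-1)) (fun q => by simp [zsh, Prod.ext_iff]) k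
  have hs : ∑ q : GridIdx N, (u q - v q) / dt = 0 := by
    simp only [h, Finset.sum_add_distrib, hx, hy, hz, add_zero]
  rw [← Finset.sum_div, Finset.sum_sub_distrib, div_eq_zero_iff] at hs
  rcases hs with hs | hs
  · linarith
  · linarith

/-- Mass conservation for the scheme. -/
theorem stmt11 (N : ℕ) [NeZero N] (dt Dc : ℝ) (hdt : 0 < dt) (hD : 0 < Dc)
    (n0 nm1 p0 pm1 n1 p1 : GridIdx N → ℝ)
    (hn0 : ∀ q, 0 < n0 q) (hnm1 : ∀ q, 0 < nm1 q)
    (hp0 : ∀ q, 0 < p0 q) (hpm1 : ∀ q, 0 < pm1 q)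
    (hn1 : ∀ q, 0 < n1 q) (hp1 : ∀ q, 0 < p1 q)
    (hzm0 : zeroMean N (fun q => n0 q - p0 q))
    (hzm1 : zeroMean N (fun q => nm1 q - pm1 q))
    (hzm2 : zeroMean N (fun q => n1 q - p1 q))
    (hsol : SolvesScheme N dt Dc n0 nm1 p0 pm1 n1 p1) :
    (∑ q : GridIdx N, n1 q) = (∑ q : GridIdx N, n0 q) ∧
    (∑ q : GridIdx N, p1 q) = (∑ q : GridIdx N, p0 q) := by
  obtain ⟨μn, μp, φn, φp, -, -, -, -, -, -, h1, h2⟩ := hsol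
  exact ⟨mass_aux hdt _ _ _ _ _ h1, mass_aux hdt _ _ _ _ _ h2⟩
end

section
/- For all ε₀* > 0 and C* > 0 there exist constants C̃₄ > 0, C̃₅ > 0 and δ₀ > 0, depending only on ε₀* and C*, with the following property. Let N ≥ 1 (h = 1/N), let 0 < Δt ≤ δ₀, and let N̂^{m+1}, N̂^m, n^{m+1}, n^m be periodic grid functions with ε₀* ≤ N̂^{m+1}(i,j,k) ≤ C* and ε₀* ≤ N̂^m(i,j,k) ≤ C* for all (i,j,k), ε₀*/2 ≤ n^m(i,j,k) ≤ C* + 1 for all (i,j,k), 0 < n^{m+1}(i,j,k) < 2C* + 1 for all (i,j,k), and ‖N̂^m − n^m‖_∞ ≤ Δt². Set ñ^{m+1} = N̂^{m+1} − n^{m+1} and ñ^m = N̂^m − n^m. Then ⟨ñ^{m+1}, G¹_{N̂^m}(N̂^{m+1}) − G¹_{n^m}(n^{m+1})⟩ + Δt·⟨ñ^{m+1}, (ln N̂^{m+1} − ln n^{m+1}) − (ln N̂^m − ln n^m)⟩ ≥ C̃₅·‖ñ^{m+1}‖₂² − C̃₄·‖ñ^m‖₂². -/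
open scoped BigOperators

open PNP

theorem log_sub_le_aux {u v : ℝ} (hu : 0 < u) (hv : 0 < v) :
    Real.log u - Real.log v ≤ (u - v) / v := by
  rw [← Real.log_div hu.ne' hv.ne', sub_div, div_self hv.ne']
  exact Real.log_le_sub_one_of_pos (div_pos hu hv)

theorem log_lip_aux {u v m : ℝ} (hm : 0 < m) (hu : m ≤ u) (hv : m ≤ v) :
    |Real.log u - Real.log v| ≤ |u - v| / m := by
  have hu0 : 0 < u := hm.trans_le hu
  have hv0 : 0 < v := hm.trans_le hv
  have key : ∀ w : ℝ, m ≤ w → |u - v| / w ≤ |u - v| / m := fun w hw =>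
    div_le_div_of_nonneg_left (abs_nonneg _) hm hw
  rw [abs_le]
  constructor
  · have h1 := log_sub_le_aux hv0 hu0
    have h2 : (v - u) / u ≤ |u - v| / u := by
      gcongr
      rw [abs_sub_comm]; exact le_abs_self _
    linarith [key u hu]
  · have h1 := log_sub_le_aux hu0 hv0
    have h2 : (u - v) / v ≤ |u - v| / v := by
      gcongr
      exact le_abs_self _
    linarith [key v hv]

theorem log_mono_aux {w v M s e : ℝ} (hw : 0 < w) (hv : 0 < v) (hwM : w ≤ M) (hvM : v ≤ M)
    (hs : 0 ≤ s) (h : w - v = s * e) :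
    s * (e ^ 2 / M) ≤ e * (Real.log w - Real.log v) := by
  have hM : 0 < M := hw.trans_le hwM
  rcases le_total 0 e with he | he
  · have h1 := log_sub_le_aux hv hw
    have h2 : s * e / M ≤ s * e / w := div_le_div_of_nonneg_left (by positivity) hw hwM
    have h3 : (v - w) / w = - (s * e / w) := by rw [← h]; ring
    have h4 : s * e / M ≤ Real.log w - Real.log v := by linarith
    calc s * (e ^ 2 / M) = e * (s * e / M) := by ring
      _ ≤ _ := by gcongr
  · have h1 := log_sub_le_aux hw hv
    have hn : 0 ≤ s * (-e) := mul_nonneg hs (by linarith)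
    have h2 : s * (-e) / M ≤ s * (-e) / v := div_le_div_of_nonneg_left hn hv hvM
    have h3 : (w - v) / v = - (s * (-e) / v) := by rw [h]; ring
    have h4 : s * (-e) / M ≤ -(Real.log w - Real.log v) := by linarith
    calc s * (e ^ 2 / M) = (-e) * (s * (-e) / M) := by ring
      _ ≤ (-e) * (-(Real.log w - Real.log v)) := by
        apply mul_le_mul_of_nonneg_left h4; linarith
      _ = _ := by ring

theorem seg_pos_aux {a x s : ℝ} (ha : 0 < a) (hx : 0 < x) (hs : s ∈ Set.Icc (0:ℝ) 1) :
    0 < a + s * (x - a) := by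
  obtain ⟨h0, h1⟩ := hs
  have : a + s * (x - a) = (1 - s) * a + s * x := by ring
  rw [this]
  rcases h0.eq_or_lt with h | h
  · subst h; simpa using ha
  · have : 0 ≤ (1 - s) * a := mul_nonneg (by linarith) ha.le
    have : 0 < s * x := by positivity
    linarith

theorem seg_int_aux {a x : ℝ} (ha : 0 < a) (hx : 0 < x) :
    IntervalIntegrable (fun s : ℝ => Real.log (a + s * (x - a)) + 1)
      MeasureTheory.volume 0 1 := by
  apply ContinuousOn.intervalIntegrable
  rw [Set.uIcc_of_le zero_le_one]
  apply ContinuousOn.add _ continuousOn_const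
  apply ContinuousOn.log (by fun_prop)
  intro s hs
  exact (seg_pos_aux ha hx hs).ne'

theorem G1_eq_aux {a x : ℝ} (ha : 0 < a) (hx : 0 < x) :
    G1 a x = ∫ s in (0:ℝ)..1, (Real.log (a + s * (x - a)) + 1) := by
  unfold G1
  split_ifs with h
  · subst h; simp
  · have hne : x - a ≠ 0 := sub_ne_zero.mpr h
    have := intervalIntegral.integral_eq_sub_of_hasDerivAt (a := 0) (b := 1)
      (f := fun s : ℝ => ((a + s * (x - a)) * Real.log (a + s * (x - a))) / (x - a))
      (f' := fun s : ℝ => Real.log (a + s * (x - a)) + 1) ?_ (seg_int_aux ha hx)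
    · rw [this]
      have e1 : a + 1 * (x - a) = x := by ring
      have e2 : a + 0 * (x - a) = a := by ring
      rw [e1, e2]; ring
    · intro s hs
      rw [Set.uIcc_of_le zero_le_one] at hs
      have hp := seg_pos_aux ha hx hs
      have hd : HasDerivAt (fun s : ℝ => a + s * (x - a)) (x - a) s := by
        simpa using ((hasDerivAt_id s).mul_const (x - a)).const_add a
      have h2 := ((Real.hasDerivAt_mul_log hp.ne').comp s hd).div_const (x - a)
      have e : (Real.log (a + s * (x - a)) + 1) * (x - a) / (x - a)
          = Real.log (a + s * (x - a)) + 1 := mul_div_cancel_right₀ _ hne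
      rw [e] at h2
      exact h2

theorem point_aux {ε M a b x y dt : ℝ} (hε : 0 < ε) (hx : ε ≤ x) (hxM : x ≤ M)
    (ha : ε ≤ a) (hb : ε / 2 ≤ b) (hbM : b ≤ M)
    (hy : 0 < y) (hyM : y ≤ M) (hdt : 0 < dt) (hdt1 : dt ≤ 1) :
    1 / (4 * M) * ((x - y) * (x - y)) - 16 * M / ε ^ 2 * ((a - b) * (a - b)) ≤
      (x - y) * (G1 a x - G1 b y) + dt * ((x - y) * ((Real.log x - Real.log y)
        - (Real.log a - Real.log b))) := by
  have hx0 : 0 < x := hε.trans_le hx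
  have ha0 : 0 < a := hε.trans_le ha
  have hb0 : 0 < b := (half_pos hε).trans_le hb
  have hM : 0 < M := hx0.trans_le hxM
  set K : ℝ := |x - y| * (|a - b| / (ε / 2)) with hK
  have hK0 : 0 ≤ K := by positivity
  have abs_aux : ∀ t : ℝ, |t| ≤ |a - b| / (ε / 2) → -K ≤ (x - y) * t := by
    intro t ht
    have h1 : |(x - y) * t| ≤ K := by
      rw [abs_mul]; exact mul_le_mul_of_nonneg_left ht (abs_nonneg _)
    exact (abs_le.mp h1).1
  have hG : (x - y) ^ 2 / (2 * M) - K ≤ (x - y) * (G1 a x - G1 b y) := by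
    rw [G1_eq_aux ha0 hx0, G1_eq_aux hb0 hy,
      ← intervalIntegral.integral_sub (seg_int_aux ha0 hx0) (seg_int_aux hb0 hy),
      ← intervalIntegral.integral_const_mul]
    have hl : (x - y) ^ 2 / (2 * M) - K =
        ∫ s in (0:ℝ)..1, (s * ((x - y) ^ 2 / M) - K) := by
      rw [intervalIntegral.integral_sub (by apply Continuous.intervalIntegrable; fun_prop)
        (by simp), intervalIntegral.integral_mul_const]
      simp
      field_simp
    rw [hl]
    apply intervalIntegral.integral_mono_on zero_le_one
    · apply Continuous.intervalIntegrable; fun_prop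
    · exact ((seg_int_aux ha0 hx0).sub (seg_int_aux hb0 hy)).const_mul _
    intro s hs
    have hs0 := hs.1
    have hs1 : 0 ≤ 1 - s := by linarith [hs.2]
    have hw : 0 < b + s * (x - b) := seg_pos_aux hb0 hx0 hs
    have hv : 0 < b + s * (y - b) := seg_pos_aux hb0 hy hs
    have m1 := log_mono_aux (M := M) (s := s) (e := x - y) hw hv
      (by nlinarith) (by nlinarith) hs0 (by ring)
    have m2 := log_lip_aux (u := a + s * (x - a)) (v := b + s * (x - b)) (half_pos hε)
      (by nlinarith) (by nlinarith)
    have m3 : |a + s * (x - a) - (b + s * (x - b))| ≤ |a - b| := by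
      have : a + s * (x - a) - (b + s * (x - b)) = (1 - s) * (a - b) := by ring
      rw [this, abs_mul, abs_of_nonneg hs1]
      nlinarith [abs_nonneg (a - b)]
    have m4 := abs_aux _ (m2.trans (by gcongr))
    linarith
  have hL : -K ≤ dt * ((x - y) * ((Real.log x - Real.log y)
        - (Real.log a - Real.log b))) := by
    have l1 := log_mono_aux (M := M) (s := 1) (e := x - y) hx0 hy hxM hyM zero_le_one (by ring)
    have l0 : 0 ≤ 1 * ((x - y) ^ 2 / M) := by positivity
    have l2 := log_lip_aux (u := a) (v := b) (half_pos hε) (by linarith) hb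
    have l3 := abs_aux (-(Real.log a - Real.log b)) (by rwa [abs_neg])
    have l4 : -K ≤ (x - y) * ((Real.log x - Real.log y) - (Real.log a - Real.log b)) := by
      linarith
    nlinarith
  have hAG : 2 * K ≤ (x - y) ^ 2 / (4 * M) + 16 * M / ε ^ 2 * (a - b) ^ 2 := by
    have e1 : (x - y) ^ 2 / (4 * M) + 16 * M / ε ^ 2 * (a - b) ^ 2 - 2 * K
        = (|x - y| - 8 * M / ε * |a - b|) ^ 2 / (4 * M) := by
      rw [hK, ← sq_abs (x - y), ← sq_abs (a - b)]
      field_simp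
      ring
    have : 0 ≤ (|x - y| - 8 * M / ε * |a - b|) ^ 2 / (4 * M) := by positivity
    linarith
  have e2 : (x - y) ^ 2 / (2 * M) = 2 * ((x - y) ^ 2 / (4 * M)) := by field_simp; ring
  have e3 : 1 / (4 * M) * ((x - y) * (x - y)) = (x - y) ^ 2 / (4 * M) := by field_simp
  rw [e3, ← sq (a - b)]
  linarith

/-- Improved bound control of the nonlinear inner products when the
numerical solution stays below `2C* + 1`. -/
theorem stmt15 (ε Cs : ℝ) (hε : 0 < ε) (hCs : 0 < Cs) :
    ∃ C4 C5 δ0 : ℝ, 0 < C4 ∧ 0 < C5 ∧ 0 < δ0 ∧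
      ∀ (N : ℕ) [NeZero N], ∀ dt : ℝ, 0 < dt → dt ≤ δ0 →
      ∀ Nh1 Nh0 n1 n0 : GridIdx N → ℝ,
        (∀ p, ε ≤ Nh1 p ∧ Nh1 p ≤ Cs) →
        (∀ p, ε ≤ Nh0 p ∧ Nh0 p ≤ Cs) →
        (∀ p, ε / 2 ≤ n0 p ∧ n0 p ≤ Cs + 1) →
        (∀ p, 0 < n1 p ∧ n1 p < 2 * Cs + 1) →
        linf N (fun p => Nh0 p - n0 p) ≤ dt ^ 2 →
        C5 * (l2 N (fun p => Nh1 p - n1 p)) ^ 2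
            - C4 * (l2 N (fun p => Nh0 p - n0 p)) ^ 2
          ≤ ip N (fun p => Nh1 p - n1 p) (fun p => G1 (Nh0 p) (Nh1 p) - G1 (n0 p) (n1 p))
            + dt * ip N (fun p => Nh1 p - n1 p)
                (fun p => (Real.log (Nh1 p) - Real.log (n1 p))
                  - (Real.log (Nh0 p) - Real.log (n0 p))) := by
  refine ⟨16 * (2 * Cs + 1) / ε ^ 2, 1 / (4 * (2 * Cs + 1)), 1, by positivity, by positivity,
    one_pos, ?_⟩
  intro N _ dt hdt hdt1 Nh1 Nh0 n1 n0 h1 h0 hn0 hn1 _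
  have hl2 : ∀ f : GridIdx N → ℝ, (l2 N f) ^ 2 = ip N f f := by
    intro f
    unfold l2
    apply Real.sq_sqrt
    unfold ip
    exact mul_nonneg (by positivity) (Finset.sum_nonneg fun p _ => mul_self_nonneg _)
  rw [hl2, hl2]
  unfold ip
  have key : ∀ p, _ := fun p => point_aux (M := 2 * Cs + 1) hε (h1 p).1 (by linarith [(h1 p).2])
    (h0 p).1 (hn0 p).1 (by linarith [(hn0 p).2]) (hn1 p).1 (hn1 p).2.le hdt hdt1
  have hs := Finset.sum_le_sum fun p (_ : p ∈ (Finset.univ : Finset (GridIdx N))) => key p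
  rw [Finset.sum_sub_distrib, Finset.sum_add_distrib, ← Finset.mul_sum, ← Finset.mul_sum,
    ← Finset.mul_sum] at hs
  have hc : (0:ℝ) ≤ (1 / (N:ℝ)) ^ 3 := by positivity
  have := mul_le_mul_of_nonneg_left hs hc
  linarith
end

section
/- For all ε₀* > 0 and C* > 0 there exists a constant C̃₇ > 0, depending only on ε₀* and C*, with the following property. Let N ≥ 1 (h = 1/N), let Δt > 0, and let N̂^{m+1}, N̂^m, n^{m+1}, n^m be periodic grid functions with ε₀* ≤ N̂^{m+1}(i,j,k) ≤ C* and ε₀* ≤ N̂^m(i,j,k) ≤ C* for all (i,j,k), ‖N̂^{m+1} − N̂^m‖_∞ ≤ C*·Δt, n^{m+1}(i,j,k) ≥ ε₀*/2 and n^m(i,j,k) ≥ ε₀*/2 for all (i,j,k), ‖N̂^{m+1} − n^{m+1}‖_∞ ≤ Δt, and ‖N̂^m − n^m‖_∞ ≤ Δt. Set ñ^{m+1} = N̂^{m+1} − n^{m+1} and ñ^m = N̂^m − n^m. Then ⟨ñ^{m+1} − ñ^m, (ln N̂^{m+1} − ln n^{m+1}) − (ln N̂^m − ln n^m)⟩ ≥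 −C̃₇·Δt·(‖ñ^{m+1}‖₂² + ‖ñ^m‖₂²). -/
open scoped BigOperators

open PNP

lemma PNP.aux17 (ε K a b n m : ℝ) (hε : 0 < ε) (ha : ε ≤ a) (hb : ε ≤ b)
    (hn : ε / 2 ≤ n) (hm : ε / 2 ≤ m) (hab : |a - b| ≤ K) :
    -(4 / ε ^ 2 * K * ((a - n) * (a - n) + (b - m) * (b - m))) ≤
      ((a - n) - (b - m)) * ((Real.log a - Real.log n) - (Real.log b - Real.log m)) := by
  have hA : ∀ s ∈ Set.Icc (0 : ℝ) 1, ε ≤ b + s * (a - b) := by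
    rintro s ⟨h0, h1⟩
    nlinarith [mul_nonneg h0 (sub_nonneg.2 ha), mul_nonneg (sub_nonneg.2 h1) (sub_nonneg.2 hb)]
  have hM : ∀ s ∈ Set.Icc (0 : ℝ) 1, ε / 2 ≤ m + s * (n - m) := by
    rintro s ⟨h0, h1⟩
    nlinarith [mul_nonneg h0 (sub_nonneg.2 hn), mul_nonneg (sub_nonneg.2 h1) (sub_nonneg.2 hm)]
  have hd : ∀ s ∈ Set.Icc (0 : ℝ) 1,
      HasDerivAt (fun s : ℝ => Real.log (b + s * (a - b)) - Real.log (m + s * (n - m)))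
        ((a - b) / (b + s * (a - b)) - (n - m) / (m + s * (n - m))) s := by
    intro s hs
    have h1 : HasDerivAt (fun s : ℝ => b + s * (a - b)) (a - b) s := by
      simpa using ((hasDerivAt_id s).mul_const (a - b)).const_add b
    have h2 : HasDerivAt (fun s : ℝ => m + s * (n - m)) (n - m) s := by
      simpa using ((hasDerivAt_id s).mul_const (n - m)).const_add m
    exact (h1.log (by linarith [hA s hs])).sub (h2.log (by linarith [hM s hs]))
  obtain ⟨s, hs, hs'⟩ := exists_hasDerivAt_eq_slope _ _ (zero_lt_one (α := ℝ))
    (fun s hs => (hd s hs).continuousAt.continuousWithinAt)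
    (fun s hs => hd s (Set.Ioo_subset_Icc_self hs))
  have hsI := Set.Ioo_subset_Icc_self hs
  have hA' := hA s hsI
  have hM' := hM s hsI
  have e1 : b + 1 * (a - b) = a := by ring
  have e2 : m + 1 * (n - m) = n := by ring
  simp only [e1, e2, zero_mul, add_zero, sub_zero, div_one] at hs'
  have e3 : (Real.log a - Real.log n) - (Real.log b - Real.log m)
      = (a - b) / (b + s * (a - b)) - (n - m) / (m + s * (n - m)) := by rw [hs']
  rw [e3]
  obtain ⟨e, he⟩ : ∃ e, e = a - n := ⟨_, rfl⟩
  obtain ⟨f, hf⟩ : ∃ f, f = b - m := ⟨_, rfl⟩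
  obtain ⟨A, hAe⟩ : ∃ A, A = b + s * (a - b) := ⟨_, rfl⟩
  obtain ⟨M, hMe⟩ : ∃ M, M = m + s * (n - m) := ⟨_, rfl⟩
  rw [← he, ← hf, ← hAe, ← hMe]
  rw [← hAe] at hA'
  rw [← hMe] at hM'
  have hAp : 0 < A := by linarith
  have hMp : 0 < M := by linarith
  have key : (e - f) * ((a - b) / A - (n - m) / M)
      = (e - f) ^ 2 / M - (e - f) * (a - b) * (f + s * (e - f)) / (A * M) := by
    have : n - m = (a - b) - (e - f) := by rw [he, hf]; ring
    have hE : f + s * (e - f) = A - M := by rw [he, hf, hAe, hMe]; ring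
    rw [this, hE]
    field_simp
    ring
  rw [key]
  have h1 : 0 ≤ (e - f) ^ 2 / M := by positivity
  have hK : 0 ≤ K := (abs_nonneg _).trans hab
  have hE : |f + s * (e - f)| ≤ |e| + |f| := by
    have : f + s * (e - f) = s * e + (1 - s) * f := by ring
    rw [this]
    refine (abs_add_le _ _).trans ?_
    rw [abs_mul, abs_mul, abs_of_nonneg hsI.1, abs_of_nonneg (sub_nonneg.2 hsI.2)]
    have h0 := hsI.1
    have h1 := hsI.2
    nlinarith [mul_nonneg (sub_nonneg.2 h1) (abs_nonneg e), mul_nonneg h0 (abs_nonneg f)]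
  have hnum : |(e - f) * (a - b) * (f + s * (e - f))| ≤ 2 * K * (e * e + f * f) := by
    rw [abs_mul, abs_mul]
    have : |e - f| * |a - b| * |f + s * (e - f)| ≤ (|e| + |f|) * K * (|e| + |f|) := by
      gcongr
      exact abs_sub _ _
    refine this.trans ?_
    have h2 : (|e| + |f|) * (|e| + |f|) ≤ 2 * (e * e + f * f) := by
      nlinarith [sq_nonneg (|e| - |f|), abs_mul_abs_self e, abs_mul_abs_self f]
    nlinarith [mul_le_mul_of_nonneg_left h2 hK]
  have hAM : ε ^ 2 / 2 ≤ A * M := by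
    have := mul_le_mul hA' hM' (by positivity) hAp.le
    nlinarith
  have hq : (e - f) * (a - b) * (f + s * (e - f)) / (A * M) ≤ 4 / ε ^ 2 * K * (e * e + f * f) := by
    calc _ ≤ 2 * K * (e * e + f * f) / (A * M) := 
          div_le_div_of_nonneg_right ((le_abs_self _).trans hnum) (by positivity)
      _ ≤ 2 * K * (e * e + f * f) / (ε ^ 2 / 2) := by
          apply div_le_div_of_nonneg_left _ (by positivity) hAM
          have := mul_self_nonneg e
          have := mul_self_nonneg f
          positivity
      _ = _ := by field_simp; ring
  linarith

/-- Refined estimate for the regularization inner product with the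
discrete temporal derivative of the error. -/
theorem stmt17 (ε Cs : ℝ) (hε : 0 < ε) (hCs : 0 < Cs) :
    ∃ C7 : ℝ, 0 < C7 ∧
      ∀ (N : ℕ) [NeZero N], ∀ dt : ℝ, 0 < dt →
      ∀ Nh1 Nh0 n1 n0 : GridIdx N → ℝ,
        (∀ p, ε ≤ Nh1 p ∧ Nh1 p ≤ Cs) →
        (∀ p, ε ≤ Nh0 p ∧ Nh0 p ≤ Cs) →
        linf N (fun p => Nh1 p - Nh0 p) ≤ Cs * dt →
        (∀ p, ε / 2 ≤ n1 p) → (∀ p, ε / 2 ≤ n0 p) →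
        linf N (fun p => Nh1 p - n1 p) ≤ dt →
        linf N (fun p => Nh0 p - n0 p) ≤ dt →
        -(C7 * dt * ((l2 N (fun p => Nh1 p - n1 p)) ^ 2
            + (l2 N (fun p => Nh0 p - n0 p)) ^ 2))
          ≤ ip N (fun p => (Nh1 p - n1 p) - (Nh0 p - n0 p))
              (fun p => (Real.log (Nh1 p) - Real.log (n1 p))
                - (Real.log (Nh0 p) - Real.log (n0 p))) := by
  refine ⟨4 / ε ^ 2 * Cs, by positivity, ?_⟩
  intro N _ dt hdt Nh1 Nh0 n1 n0 h1 h0 hd hn1 hn0 _ _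
  have hsq : ∀ g : GridIdx N → ℝ, (l2 N g) ^ 2 = ip N g g := by
    intro g
    apply Real.sq_sqrt
    exact mul_nonneg (by positivity) (Finset.sum_nonneg fun p _ => mul_self_nonneg _)
  rw [hsq, hsq]
  unfold ip
  rw [← mul_add, ← Finset.sum_add_distrib, mul_left_comm, ← mul_neg, Finset.mul_sum,
    ← Finset.sum_neg_distrib]
  refine mul_le_mul_of_nonneg_left (Finset.sum_le_sum fun p _ => ?_) (by positivity)
  have hp : |Nh1 p - Nh0 p| ≤ Cs * dt :=
    (le_ciSup (f := fun p => |Nh1 p - Nh0 p|) (Set.finite_range _).bddAbove p).trans hd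
  have := PNP.aux17 ε (Cs * dt) (Nh1 p) (Nh0 p) (n1 p) (n0 p) hε (h1 p).1 (h0 p).1 (hn1 p) (hn0 p) hp
  rw [← mul_assoc] at this
  exact this
end
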